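/- arXiv:math/9304212 — 5 statements merged into one kernel-verified Lean document; each statement's English description precedes it below -/
import Mathlib

section
/- Let K be an algebraically closed field and let C ⊆ K^n × K be Zariski-closed. Then there exists an integer m such that for every a ∈ K^n, the fibre C(a) = {b ∈ K : (a,b) ∈ C} either equals all of K or has at most m elements. -/
/-- A subset of `K^n` is *Zariski-closed* (an affine algebraic set) if it is the common
zero set of a set of polynomials in `n` variables. -/
def ZariskiClosedSet (K : Type*) [Field K] {n : ℕ} (C : Set (Fin n → K)) : Prop :=
  ∃ S : Set (MvPolynomial (Fin n) K), C = {x | ∀ f ∈ S, MvPolynomial.eval x f = 0}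

/-- Axiom (Z2) for the affine line over an algebraically closed field: if
`C ⊆ K^n × K` is Zariski-closed, then there is an integer `m` such that every fibre
`C(a) = {b ∈ K | (a, b) ∈ C}` either is all of `K` or has at most `m` elements. -/
theorem affine_Z2 {K : Type*} [Field K] [IsAlgClosed K] {n : ℕ}
    (C : Set (Fin (n + 1) → K)) (hC : ZariskiClosedSet K C) :
    ∃ m : ℕ, ∀ a : Fin n → K,
      {b : K | Fin.snoc a b ∈ C} = Set.univ ∨
      ({b : K | Fin.snoc a b ∈ C}.Finite ∧ {b : K | Fin.snoc a b ∈ C}.ncard ≤ m) := by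
  classical
  obtain ⟨S, rfl⟩ := hC
  obtain ⟨T, hTS, hT⟩ := (Submodule.fg_span_iff_fg_span_finset_subset S).1
    (IsNoetherian.noetherian (Submodule.span (MvPolynomial (Fin (n + 1)) K) S))
  have key : ∀ x : Fin (n + 1) → K,
      (∀ f ∈ T, MvPolynomial.eval x f = 0) → ∀ f ∈ S, MvPolynomial.eval x f = 0 := by
    intro x hx f hf
    have h1 : f ∈ Ideal.span (T : Set (MvPolynomial (Fin (n + 1)) K)) := by
      have h2 := Submodule.subset_span (R := MvPolynomial (Fin (n + 1)) K) hf
      rw [hT] at h2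
      exact h2
    have h3 : Ideal.span (T : Set (MvPolynomial (Fin (n + 1)) K)) ≤
        RingHom.ker (MvPolynomial.eval x) := Ideal.span_le.2 fun g hg => hx g hg
    exact h3 h1
  refine ⟨T.sup MvPolynomial.totalDegree, fun a => ?_⟩
  let v : Fin (n + 1) → Polynomial K :=
    Fin.snoc (α := fun _ => Polynomial K) (fun i => Polynomial.C (a i)) Polynomial.X
  have hv : ∀ i, (v i).natDegree ≤ 1 := by
    intro i
    refine Fin.lastCases ?_ (fun j => ?_) i <;> simp [v]
  have hev : ∀ (f : MvPolynomial (Fin (n + 1)) K) (b : K),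
      (MvPolynomial.aeval v f).eval b
        = MvPolynomial.eval (Fin.snoc (α := fun _ => K) a b) f := by
    intro f b
    have h : ((Polynomial.aeval b).comp (MvPolynomial.aeval v) :
        MvPolynomial (Fin (n + 1)) K →ₐ[K] K)
        = MvPolynomial.aeval (Fin.snoc (α := fun _ => K) a b) := by
      ext i
      refine Fin.lastCases ?_ (fun j => ?_) i <;> simp [v]
    have h' := DFunLike.congr_fun h f
    simpa [Polynomial.coe_aeval_eq_eval, MvPolynomial.aeval_eq_eval] using h'
  by_cases h0 : ∀ f ∈ T, MvPolynomial.aeval v f = 0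
  · left
    refine Set.eq_univ_of_forall fun b => key _ fun f hf => ?_
    rw [← hev, h0 f hf, Polynomial.eval_zero]
  · right
    push Not at h0
    obtain ⟨f, hf, hne⟩ := h0
    have hsub : {b : K | Fin.snoc (α := fun _ => K) a b ∈
        {x : Fin (n + 1) → K | ∀ f ∈ S, MvPolynomial.eval x f = 0}} ⊆
        ((MvPolynomial.aeval v f).roots.toFinset : Set K) := by
      intro b hb
      have h := hb f (hTS hf)
      rw [← hev] at h
      simpa [hne] using h
    refine ⟨(Finset.finite_toSet _).subset hsub, ?_⟩
    calc _ ≤ _ := Set.ncard_le_ncard hsub (Finset.finite_toSet _)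
      _ = _ := Set.ncard_coe_finset _
      _ ≤ _ := Multiset.toFinset_card_le _
      _ ≤ _ := Polynomial.card_roots' _
      _ ≤ f.totalDegree * 1 := MvPolynomial.aeval_natDegree_le f le_rfl v hv
      _ ≤ _ := by
        rw [mul_one]
        exact Finset.le_sup (f := MvPolynomial.totalDegree) hf
end

section
/- Let k ⊆ K be a field extension, let m, n ≥ 1, and let a_1, …, a_m, b_1, …, b_n ∈ K be such that the family (a_1, …, a_m, b_1, …, b_n) of m + n elements is algebraically independent over k. Then the transcendence degree over k of the subfield k(a_i + b_j : 1 ≤ i ≤ m, 1 ≤ j ≤ n) generated over k by all the pairwise sums a_i + b_j equals m + n − 1. -/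
/-- The transcendence degree of a (commutative ring) extension `K / k`: the supremum of
the cardinalities of subsets of `K` that are algebraically independent over `k`. -/
noncomputable def trdeg (k K : Type*) [CommRing k] [CommRing K] [Algebra k K] : Cardinal :=
  ⨆ s : {s : Set K // AlgebraicIndependent k ((↑) : s → K)}, Cardinal.mk s.1

/-- The field generated by an algebraically independent family has a transcendence basis
indexed by that family. -/
theorem card_eq_trdeg_adjoin {k K : Type*} [Field k] [Field K] [Algebra k K]
    {ι : Type} [Fintype ι] (y : ι → K) (hy : AlgebraicIndependent k y) :
    Algebra.trdeg k (IntermediateField.adjoin k (Set.range y)) = (Fintype.card ι : Cardinal) := by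
  have h1 := IsTranscendenceBasis.mvPolynomial ι k
  have : Algebra.IsAlgebraic (MvPolynomial ι k) (FractionRing (MvPolynomial ι k)) :=
    (IsFractionRing.comap_isAlgebraic_iff (A := MvPolynomial ι k)
      (K := FractionRing (MvPolynomial ι k)) (C := FractionRing (MvPolynomial ι k))).mpr
      inferInstance
  have h2 := h1.algebraMap_comp (A := FractionRing (MvPolynomial ι k))
  have h3 := hy.aevalEquivField.isTranscendenceBasis h2
  have h4 := h3.lift_cardinalMk_eq_trdeg
  simpa using h4.symm

theorem trdeg_adjoin_pairwise_sums {k K : Type*} [Field k] [Field K] [Algebra k K]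
    {m n : ℕ} (hm : 1 ≤ m) (hn : 1 ≤ n) (a : Fin m → K) (b : Fin n → K)
    (hab : AlgebraicIndependent k (Sum.elim a b)) :
    trdeg k (IntermediateField.adjoin k
        (Set.range fun p : Fin m × Fin n => a p.1 + b p.2)) =
      ((m + n - 1 : ℕ) : Cardinal) := by
  classical
  change Algebra.trdeg k _ = _
  let i0 : Fin m := ⟨0, hm⟩
  let j0 : Fin n := ⟨0, hn⟩
  -- the triangular change of variables and its inverse
  let z : Fin m ⊕ Fin n → MvPolynomial (Fin m ⊕ Fin n) k :=
    Sum.elim (fun i => .X (.inl i) + .X (.inr j0))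
      (fun j => if j = j0 then .X (.inr j0) else .X (.inr j) - .X (.inr j0))
  let w : Fin m ⊕ Fin n → MvPolynomial (Fin m ⊕ Fin n) k :=
    Sum.elim (fun i => .X (.inl i) - .X (.inr j0))
      (fun j => if j = j0 then .X (.inr j0) else .X (.inr j) + .X (.inr j0))
  have hz : AlgebraicIndependent k z := by
    have hc : (MvPolynomial.aeval w).comp (MvPolynomial.aeval z) = AlgHom.id k _ := by
      apply MvPolynomial.algHom_ext
      rintro (i | j)
      · simp [z, w]
      · by_cases h : j = j0 <;> simp [z, w, h]
    rw [algebraicIndependent_iff]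
    intro p hp
    have h1 := DFunLike.congr_fun hc p
    rw [AlgHom.comp_apply, hp, map_zero, AlgHom.id_apply] at h1
    exact h1.symm
  have hy := (hab.aeval_of_algebraicIndependent hz).comp
    (Subtype.val : {s : Fin m ⊕ Fin n // s ≠ .inr j0} → _) Subtype.val_injective
  set y := (fun i => MvPolynomial.aeval (Sum.elim a b) (z i)) ∘
    (Subtype.val : {s : Fin m ⊕ Fin n // s ≠ .inr j0} → _) with hydef
  have yl (i) : y ⟨.inl i, by simp⟩ = a i + b j0 := by simp [y, z]
  have yr (j) (hj : j ≠ j0) : y ⟨.inr j, by simpa using hj⟩ = b j - b j0 := by simp [y, z, hj]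
  have hL : IntermediateField.adjoin k (Set.range fun p : Fin m × Fin n => a p.1 + b p.2) =
      IntermediateField.adjoin k (Set.range y) := by
    apply le_antisymm <;> rw [IntermediateField.adjoin_le_iff]
    · rintro _ ⟨⟨i, j⟩, rfl⟩
      have h1 : a i + b j0 ∈ IntermediateField.adjoin k (Set.range y) :=
        IntermediateField.subset_adjoin _ _ ⟨_, yl i⟩
      by_cases h : j = j0
      · subst h; exact h1
      · have h2 : b j - b j0 ∈ IntermediateField.adjoin k (Set.range y) :=
          IntermediateField.subset_adjoin _ _ ⟨_, yr j h⟩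
        have h3 := add_mem h1 h2
        rwa [show a i + b j0 + (b j - b j0) = a i + b j by ring] at h3
    · have hs (i j) : a i + b j ∈ IntermediateField.adjoin k
          (Set.range fun p : Fin m × Fin n => a p.1 + b p.2) :=
        IntermediateField.subset_adjoin _ _ ⟨(i, j), rfl⟩
      rintro _ ⟨⟨i | j, h⟩, rfl⟩
      · rw [yl]; exact hs _ _
      · rw [yr j (by simpa using h)]
        have h3 := sub_mem (hs i0 j) (hs i0 j0)
        rwa [add_sub_add_left_eq_sub] at h3
  rw [hL, card_eq_trdeg_adjoin y hy]
  congr 1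
  simp [Fintype.card_subtype_compl]
end

section
/- Let k ⊆ K be a field extension, let m, n ≥ 2, and let a_1, …, a_m, b_1, …, b_m, g_1, …, g_n ∈ K be such that the family of all 2m + n elements (a_i, b_i, g_j) is algebraically independent over k. Set c_{ij} = a_i + b_i·g_j for 1 ≤ i ≤ m and 1 ≤ j ≤ n. Then the transcendence degree over k of the subfield k(c_{ij} : 1 ≤ i ≤ m, 1 ≤ j ≤ n) equals 2m + n − 2. -/
theorem aux_isAlgebraic {k E ι : Type*} [Field k] [Field E] [Algebra k E] (x : ι → E)
    (h : IntermediateField.adjoin k (Set.range x) = ⊤) :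
    Algebra.IsAlgebraic (Algebra.adjoin k (Set.range x)) E := by
  refine ⟨fun e => ?_⟩
  rw [← IntermediateField.isAlgebraic_adjoin_iff, h]
  exact isAlgebraic_algebraMap (⟨e, trivial⟩ : (⊤ : IntermediateField k E))

theorem aux_top {k K ι : Type*} [Field k] [Field K] [Algebra k K] (F : IntermediateField k K)
    (y : ι → F) (h : IntermediateField.adjoin k (Set.range fun i => (y i : K)) = F) :
    IntermediateField.adjoin k (Set.range y) = ⊤ := by
  apply IntermediateField.map_injective F.val
  rw [IntermediateField.adjoin_map, ← Set.range_comp, ← AlgHom.fieldRange_eq_map,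
    IntermediateField.fieldRange_val]
  exact h

theorem aux_trdeg {k K : Type*} {ι : Type} [Field k] [Field K] [Algebra k K] (x : ι → K)
    (hx : AlgebraicIndependent k x) (F : IntermediateField k K)
    (hF : IntermediateField.adjoin k (Set.range x) = F) :
    Algebra.trdeg k F = Cardinal.lift (Cardinal.mk ι) := by
  have hmem : ∀ i, x i ∈ F := fun i => hF ▸ IntermediateField.subset_adjoin k _ ⟨i, rfl⟩
  let x' : ι → F := fun i => ⟨x i, hmem i⟩
  have hx' : AlgebraicIndependent k x' := AlgebraicIndependent.of_comp F.val hx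
  have := aux_isAlgebraic x' (aux_top F x' hF)
  have hb := hx'.isTranscendenceBasis_iff_isAlgebraic.2 this
  simpa using hb.lift_cardinalMk_eq_trdeg.symm

theorem aux_indep {k K : Type*} {ι : Type} [Finite ι] [Field k] [Field K] [Algebra k K]
    (x y : ι → K) (hx : AlgebraicIndependent k x)
    (h : IntermediateField.adjoin k (Set.range y) = IntermediateField.adjoin k (Set.range x)) :
    AlgebraicIndependent k y := by
  set F := IntermediateField.adjoin k (Set.range x) with hF
  have hmem : ∀ i, y i ∈ F := fun i => h ▸ IntermediateField.subset_adjoin k _ ⟨i, rfl⟩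
  let y' : ι → F := fun i => ⟨y i, hmem i⟩
  have := aux_isAlgebraic y' (aux_top F y' h)
  have hb : IsTranscendenceBasis k y' :=
    Algebra.IsAlgebraic.isTranscendenceBasis_of_lift_le_trdeg_of_finite k y'
      (by rw [aux_trdeg x hx F hF.symm]; simp)
  exact hb.1.map' (f := F.val) F.val.injective

theorem trdeg_adjoin_affine_configuration {k K : Type*} [Field k] [Field K] [Algebra k K]
    {m n : ℕ} (hm : 2 ≤ m) (hn : 2 ≤ n)
    (a b : Fin m → K) (g : Fin n → K)
    (habg : AlgebraicIndependent k (Sum.elim a (Sum.elim b g))) :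
    trdeg k (IntermediateField.adjoin k
        (Set.range fun p : Fin m × Fin n => a p.1 + b p.1 * g p.2)) =
      ((2 * m + n - 2 : ℕ) : Cardinal) := by
  obtain ⟨n, rfl⟩ : ∃ r, n = r + 2 := ⟨n - 2, by omega⟩
  change Algebra.trdeg k _ = _
  have hg : g 1 - g 0 ≠ 0 := by
    intro h
    have := habg.injective (a₁ := Sum.inr (Sum.inr 1)) (a₂ := Sum.inr (Sum.inr 0))
      (by simpa [sub_eq_zero] using h)
    simp at this
  obtain ⟨i₀⟩ : Nonempty (Fin m) := ⟨⟨0, by omega⟩⟩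
  have hb : ∀ i, b i ≠ 0 := fun i => habg.ne_zero (Sum.inr (Sum.inl i))
  let u : Fin m → K := fun i => a i + b i * g 0
  let v : Fin m → K := fun i => b i * (g 1 - g 0)
  let w : Fin n → K := fun j => (g j.succ.succ - g 0) / (g 1 - g 0)
  let y : Fin m ⊕ Fin m ⊕ Fin (n + 2) → K :=
    Sum.elim u (Sum.elim v (Fin.cons (g 0) (Fin.cons (g 1) w)))
  have hy : AlgebraicIndependent k y := by
    apply aux_indep _ y habg
    apply le_antisymm
    · rw [IntermediateField.adjoin_le_iff]
      set F := IntermediateField.adjoin k (Set.range (Sum.elim a (Sum.elim b g))) with hF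
      have ha : ∀ i, a i ∈ F := fun i => IntermediateField.subset_adjoin k _ ⟨Sum.inl i, rfl⟩
      have hb : ∀ i, b i ∈ F := fun i =>
        IntermediateField.subset_adjoin k _ ⟨Sum.inr (Sum.inl i), rfl⟩
      have hgF : ∀ i, g i ∈ F := fun i =>
        IntermediateField.subset_adjoin k _ ⟨Sum.inr (Sum.inr i), rfl⟩
      rintro _ ⟨i | i | j, rfl⟩
      · exact F.add_mem (ha i) (F.mul_mem (hb i) (hgF 0))
      · exact F.mul_mem (hb i) (F.sub_mem (hgF 1) (hgF 0))
      · refine Fin.cases ?_ (fun j => Fin.cases ?_ (fun j => ?_) j) j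
        · exact hgF 0
        · exact hgF 1
        · exact F.div_mem (F.sub_mem (hgF _) (hgF 0)) (F.sub_mem (hgF 1) (hgF 0))
    · rw [IntermediateField.adjoin_le_iff]
      set F := IntermediateField.adjoin k (Set.range y) with hF
      have hu : ∀ i, u i ∈ F := fun i => IntermediateField.subset_adjoin k _ ⟨Sum.inl i, rfl⟩
      have hv : ∀ i, v i ∈ F := fun i =>
        IntermediateField.subset_adjoin k _ ⟨Sum.inr (Sum.inl i), rfl⟩
      have hg0 : g 0 ∈ F := IntermediateField.subset_adjoin k _ ⟨Sum.inr (Sum.inr 0), rfl⟩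
      have hg1 : g 1 ∈ F := IntermediateField.subset_adjoin k _ ⟨Sum.inr (Sum.inr 1), rfl⟩
      have hw : ∀ j, w j ∈ F := fun j =>
        IntermediateField.subset_adjoin k _ ⟨Sum.inr (Sum.inr j.succ.succ), rfl⟩
      have hd := F.sub_mem hg1 hg0
      have hbF : ∀ i, b i ∈ F := fun i => by
        have := F.div_mem (hv i) hd
        rwa [show v i / (g 1 - g 0) = b i from mul_div_cancel_right₀ _ hg] at this
      rintro _ ⟨i | i | j, rfl⟩
      · have := F.sub_mem (hu i) (F.mul_mem (hbF i) hg0)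
        rwa [show u i - b i * g 0 = a i from add_sub_cancel_right _ _] at this
      · exact hbF i
      · refine Fin.cases ?_ (fun j => Fin.cases ?_ (fun j => ?_) j) j
        · exact hg0
        · exact hg1
        · have := F.add_mem (F.mul_mem (hw j) hd) hg0
          rwa [show w j * (g 1 - g 0) + g 0 = g j.succ.succ by
            simp only [w]; field_simp; ring] at this
  let e : Fin m ⊕ Fin m ⊕ Fin n → Fin m ⊕ Fin m ⊕ Fin (n + 2) :=
    Sum.map id (Sum.map id (fun j => j.succ.succ))
  have he : Function.Injective e := by
    refine Function.injective_id.sumMap (Function.injective_id.sumMap ?_)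
    intro i j h
    simpa using h
  have hz := hy.comp e he
  rw [aux_trdeg (y ∘ e) hz]
  · simp only [Cardinal.mk_sum, Cardinal.mk_fin, Cardinal.lift_natCast, Cardinal.lift_add]
    norm_cast
    omega
  apply le_antisymm
  · rw [IntermediateField.adjoin_le_iff]
    set F := IntermediateField.adjoin k
      (Set.range fun p : Fin m × Fin (n + 2) => a p.1 + b p.1 * g p.2) with hF
    have hc : ∀ i j, a i + b i * g j ∈ F := fun i j =>
      IntermediateField.subset_adjoin k _ ⟨(i, j), rfl⟩
    have hd : ∀ i j, b i * (g j - g 0) ∈ F := fun i j => by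
      have := F.sub_mem (hc i j) (hc i 0)
      rwa [show a i + b i * g j - (a i + b i * g 0) = b i * (g j - g 0) by ring] at this
    rintro _ ⟨i | i | j, rfl⟩
    · exact hc i 0
    · exact hd i 1
    · have := F.div_mem (hd i₀ j.succ.succ) (hd i₀ 1)
      rwa [mul_div_mul_left _ _ (hb i₀)] at this
  · rw [IntermediateField.adjoin_le_iff]
    set F := IntermediateField.adjoin k (Set.range (y ∘ e)) with hF
    have hu : ∀ i, u i ∈ F := fun i => IntermediateField.subset_adjoin k _ ⟨Sum.inl i, rfl⟩
    have hv : ∀ i, v i ∈ F := fun i =>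
      IntermediateField.subset_adjoin k _ ⟨Sum.inr (Sum.inl i), rfl⟩
    have hw : ∀ j, w j ∈ F := fun j =>
      IntermediateField.subset_adjoin k _ ⟨Sum.inr (Sum.inr j), rfl⟩
    rintro _ ⟨⟨i, j⟩, rfl⟩
    refine Fin.cases ?_ (fun j => Fin.cases ?_ (fun j => ?_) j) j
    · exact hu i
    · have := F.add_mem (hu i) (hv i)
      rwa [show u i + v i = a i + b i * g 1 by simp only [u, v]; ring] at this
    · have := F.add_mem (hu i) (F.mul_mem (hv i) (hw j))
      rwa [show u i + v i * w j = a i + b i * g j.succ.succ by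
        simp only [u, v, w]; field_simp; ring] at this
end

section
/- Let K be a field, let C ⊆ K² be an infinite set, and let m be a natural number. Then there exist a natural number d ≥ 1 and a nonzero polynomial f ∈ K[X,Y] of total degree at most d such that the set C ∩ {p ∈ K² : f(p) = 0} has more than d·m elements. -/
/-- Counting step in the proof of Theorem 3: for an infinite set `C ⊆ K²` and any
`m : ℕ`, there are a degree `d ≥ 1` and a nonzero polynomial `f ∈ K[X,Y]` of total
degree at most `d` whose zero set meets `C` in more than `d * m` points. -/
theorem exists_curve_with_many_intersections {K : Type*} [Field K]
    (C : Set (Fin 2 → K)) (hC : C.Infinite) (m : ℕ) :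
    ∃ d : ℕ, 1 ≤ d ∧ ∃ f : MvPolynomial (Fin 2) K, f ≠ 0 ∧ f.totalDegree ≤ d ∧
      ∃ T : Finset (Fin 2 → K),
        ↑T ⊆ C ∩ {p : Fin 2 → K | MvPolynomial.eval p f = 0} ∧ d * m < T.card := by
  classical
  obtain ⟨T, hTC, hT⟩ := hC.exists_subset_card_eq ((4 * m + 2) * m + 1)
  let n := 2 * m + 2
  let e : Fin n × Fin n → (Fin 2 →₀ ℕ) := fun ij =>
    Finsupp.single 0 (ij.1 : ℕ) + Finsupp.single 1 (ij.2 : ℕ)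
  have he : Function.Injective e := by
    intro a b hab
    have h0 := DFunLike.congr_fun hab 0
    have h1 := DFunLike.congr_fun hab 1
    simp [e] at h0 h1
    exact Prod.ext (Fin.ext h0) (Fin.ext h1)
  let P : (Fin n × Fin n → K) →ₗ[K] MvPolynomial (Fin 2) K :=
    ∑ ij, (MvPolynomial.monomial (e ij)).comp (LinearMap.proj ij)
  have hP : ∀ c, P c = ∑ ij, MvPolynomial.monomial (e ij) (c ij) := by
    intro c
    simp [P]
  let ev : MvPolynomial (Fin 2) K →ₗ[K] (T → K) :=
    LinearMap.pi fun p => (MvPolynomial.aeval (R := K) p.1).toLinearMap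
  have hker : LinearMap.ker (ev.comp P) ≠ ⊥ := by
    apply LinearMap.ker_ne_bot_of_finrank_lt
    simp only [Module.finrank_fintype_fun_eq_card, Fintype.card_coe, Fintype.card_prod,
      Fintype.card_fin, hT, n]
    nlinarith
  obtain ⟨c, hc, hc0⟩ := (Submodule.ne_bot_iff _).1 hker
  refine ⟨4 * m + 2, by omega, P c, ?_, ?_, T, ?_, by omega⟩
  · intro h
    apply hc0
    funext ij
    have := congrArg (MvPolynomial.coeff (e ij)) h
    simpa [hP, MvPolynomial.coeff_sum, MvPolynomial.coeff_monomial, he.eq_iff] using this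
  · rw [hP]
    refine MvPolynomial.totalDegree_finsetSum_le fun ij _ => ?_
    refine (MvPolynomial.totalDegree_monomial_le _ _).trans ?_
    have h1 := ij.1.isLt
    have h2 := ij.2.isLt
    simp [e, Finsupp.sum_fintype]
    omega
  · intro p hp
    refine ⟨hTC hp, ?_⟩
    have := congrFun (LinearMap.mem_ker.1 hc) ⟨p, hp⟩
    simpa [ev, MvPolynomial.aeval_eq_eval] using this
end

section
/- Let K be an algebraically closed field, let (τ_n) be a Zariski geometry on K such that every Zariski-closed subset of K^n is τ_n-closed, and let C ⊆ K² be a τ_2-closed irreducible set of dimension 1. Then there exist a natural number m and a nonempty Zariski-open set U ⊆ K² such that for every (a,b) ∈ U the set C ∩ {(x,y) ∈ K² : y = a·x + b} is finite with exactly m elements. (This m is called the degree of the curve C.) -/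
open Topology

/-- The Zariski topology on `K^n`: the topology whose closed sets are the affine
algebraic sets. -/
def zariskiTopology (K : Type*) [Field K] (n : ℕ) : TopologicalSpace (Fin n → K) :=
  TopologicalSpace.generateFrom {U | ZariskiClosedSet K Uᶜ}

/-- The dimension of a subset `S` of a topological space: the topological Krull
dimension of `S` with the subspace topology (the maximal length of a chain of
irreducible closed subsets). -/
noncomputable def setKrullDim {X : Type*} (t : TopologicalSpace X) (S : Set X) : WithBot ℕ∞ :=
  @topologicalKrullDim S (t.induced Subtype.val)

/-- `T` is an irreducible component of `S` (w.r.t. the topology `t`) if `T` is a maximal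
irreducible subset of `S`. -/
def IsIrredComponentOf {X : Type*} (t : TopologicalSpace X) (T S : Set X) : Prop :=
  Maximal (fun T => T ⊆ S ∧ @IsIrreducible X t T) T

/-- A *Zariski geometry* on a set `X`: a Noetherian topology on each Cartesian power
`X^n` satisfying axioms (Z0)-(Z3). -/
structure ZariskiGeometry (X : Type*) where
  τ : ∀ n : ℕ, TopologicalSpace (Fin n → X)
  noetherian : ∀ n, @TopologicalSpace.NoetherianSpace (Fin n → X) (τ n)
  /-- (Z0): every map `X^n → X^m` each of whose coordinates is a constant or a
  coordinate projection is continuous. -/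
  Z0_cont : ∀ (n m : ℕ) (g : Fin m → (Fin n ⊕ X)),
    Continuous[τ n, τ m] (fun x i => Sum.elim (fun j => x j) id (g i))
  /-- (Z0): the diagonals are closed. -/
  Z0_diag : ∀ (n : ℕ) (i j : Fin n), IsClosed[τ n] {x | x i = x j}
  /-- (Z1): for a (nonempty) closed `C ⊆ X^n` and a coordinate projection
  `π : X^n → X^k`, there is a proper closed subset `F` of `cl(π C)` with
  `cl(π C) \ F ⊆ π C`. -/
  Z1 : ∀ (n k : ℕ) (h : k ≤ n) (C : Set (Fin n → X)), IsClosed[τ n] C → C.Nonempty →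
    ∃ F : Set (Fin k → X), IsClosed[τ k] F ∧
      F ⊂ closure[τ k] ((fun x => x ∘ Fin.castLE h) '' C) ∧
      closure[τ k] ((fun x => x ∘ Fin.castLE h) '' C) \ F ⊆ (fun x => x ∘ Fin.castLE h) '' C
  /-- (Z2): `X` is irreducible. -/
  Z2_irred : @IrreducibleSpace (Fin 1 → X) (τ 1)
  /-- (Z2): uniform one-dimensionality. -/
  Z2 : ∀ (n : ℕ) (C : Set (Fin (n + 1) → X)), IsClosed[τ (n + 1)] C →
    ∃ m : ℕ, ∀ a : Fin n → X, {b : X | Fin.snoc a b ∈ C} = Set.univ ∨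
      ({b : X | Fin.snoc a b ∈ C}.Finite ∧ {b : X | Fin.snoc a b ∈ C}.ncard ≤ m)
  /-- (Z3) (Dimension theorem): every irreducible component of the intersection of a
  closed irreducible `U ⊆ X^n` with a diagonal has dimension `≥ dim U - 1`. -/
  Z3 : ∀ (n : ℕ) (U : Set (Fin n → X)) (i j : Fin n), IsClosed[τ n] U →
    @IsIrreducible _ (τ n) U →
    ∀ T : Set (Fin n → X), IsIrredComponentOf (τ n) T (U ∩ {x | x i = x j}) →
      setKrullDim (τ n) U ≤ setKrullDim (τ n) T + 1

open Topology TopologicalSpace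

namespace PC

section Gen
variable {X Y Z : Type*} [TopologicalSpace X] [TopologicalSpace Y] [TopologicalSpace Z]

/-- `U` is irreducible and closed, and has a chain of length `k` of irreducible closed
subsets. -/
def IrrDim {X : Type*} [TopologicalSpace X] : ℕ → Set X → Prop
  | 0, U => IsIrreducible U ∧ IsClosed U
  | k+1, U => (IsIrreducible U ∧ IsClosed U) ∧ ∃ V, V ⊂ U ∧ IrrDim k V

theorem IrrDim.ic {k : ℕ} {U : Set X} (h : IrrDim k U) : IsIrreducible U ∧ IsClosed U := by
  cases k with
  | zero => exact h
  | succ k => exact h.1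

theorem IrrDim.irr {k : ℕ} {U : Set X} (h : IrrDim k U) : IsIrreducible U := h.ic.1
theorem IrrDim.cl {k : ℕ} {U : Set X} (h : IrrDim k U) : IsClosed U := h.ic.2
theorem IrrDim.ne {k : ℕ} {U : Set X} (h : IrrDim k U) : U.Nonempty := h.ic.1.nonempty

theorem IrrDim.pred {k : ℕ} : ∀ {U : Set X}, IrrDim (k+1) U → IrrDim k U := by
  induction k with
  | zero => intro U h; exact h.ic
  | succ k ih =>
    intro U h
    obtain ⟨h1, V, hV, hk⟩ := h
    exact ⟨h1, V, hV, ih hk⟩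

theorem IrrDim.mono {k l : ℕ} (hkl : l ≤ k) {U : Set X} (h : IrrDim k U) : IrrDim l U := by
  induction k, hkl using Nat.le_induction with
  | base => exact h
  | succ k _ ih => exact ih h.pred

theorem IrrDim.succ_of_ssubset {k : ℕ} {U V : Set X} (hV : IrrDim k V) (h : V ⊂ U)
    (hU : IsIrreducible U) (hc : IsClosed U) : IrrDim (k+1) U := ⟨⟨hU, hc⟩, V, h, hV⟩

theorem IrrDim.of_subset {k : ℕ} {U V : Set X} (hV : IrrDim k V) (h : V ⊆ U)
    (hU : IsIrreducible U) (hc : IsClosed U) : IrrDim k U := by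
  by_cases h' : U = V
  · rw [h']; exact hV
  · exact (hV.succ_of_ssubset (h.ssubset_of_ne (Ne.symm h')) hU hc).pred

theorem IrrDim.map {k : ℕ} (Φ : Set X → Set Y) : ∀ {U : Set X}, IrrDim k U →
    (∀ V, V ⊆ U → IsIrreducible V → IsClosed V → IsIrreducible (Φ V) ∧ IsClosed (Φ V)) →
    (∀ V W, V ⊂ W → W ⊆ U → IsIrreducible V → IsIrreducible W → IsClosed V → IsClosed W →
      Φ V ⊂ Φ W) → IrrDim k (Φ U) := by
  induction k with
  | zero => intro U h h1 _; exact h1 U le_rfl h.1 h.2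
  | succ k ih =>
    intro U h h1 h2
    obtain ⟨h0, V, hV, hk⟩ := h
    refine ⟨h1 U le_rfl h0.1 h0.2, Φ V, h2 V U hV le_rfl hk.irr h0.1 hk.cl h0.2, ?_⟩
    exact ih hk (fun W hW => h1 W (hW.trans hV.subset))
      (fun A B hAB hB => h2 A B hAB (hB.trans hV.subset))

/-- The order isomorphism. -/
def icIso (U : IrreducibleCloseds X) : IrreducibleCloseds (U : Set X) ≃o Set.Iic U where
  toFun V := ⟨⟨Subtype.val '' (V : Set (U : Set X)),
      V.isIrreducible.image _ continuous_subtype_val.continuousOn,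
      U.isClosed.isClosedMap_subtype_val _ V.isClosed⟩, by
      rintro _ ⟨x, _, rfl⟩; exact x.2⟩
  invFun W := ⟨Subtype.val ⁻¹' (W.1 : Set X), by
      have hW : (W.1 : Set X) ⊆ U := W.2
      refine ⟨?_, ?_⟩
      · obtain ⟨x, hx⟩ := W.1.isIrreducible.nonempty
        exact ⟨⟨x, hW hx⟩, hx⟩
      · rintro u v hu hv ⟨x, hx, hxu⟩ ⟨y, hy, hyv⟩
        obtain ⟨u', hu', rfl⟩ := isOpen_induced_iff.1 hu
        obtain ⟨v', hv', rfl⟩ := isOpen_induced_iff.1 hv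
        obtain ⟨z, hz, hzu⟩ := W.1.isIrreducible.isPreirreducible u' v' hu' hv'
          ⟨x, hx, hxu⟩ ⟨y, hy, hyv⟩
        exact ⟨⟨z, hW hz⟩, hz, hzu⟩,
      W.1.isClosed.preimage continuous_subtype_val⟩
  left_inv V := by
    apply IrreducibleCloseds.ext
    exact Set.preimage_image_eq _ Subtype.val_injective
  right_inv W := by
    have hW : (W.1 : Set X) ⊆ U := W.2
    apply Subtype.ext
    apply IrreducibleCloseds.ext
    show Subtype.val '' (Subtype.val ⁻¹' (W.1 : Set X)) = _
    rw [Subtype.image_preimage_coe]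
    exact Set.inter_eq_right.2 hW
  map_rel_iff' := by
    intro V W
    exact Set.image_subset_image_iff Subtype.val_injective

theorem irrDim_iff_height {k : ℕ} : ∀ (U : IrreducibleCloseds X),
    IrrDim k (U : Set X) ↔ (k : ℕ∞) ≤ Order.height U := by
  induction k with
  | zero => intro U; simp only [Nat.cast_zero, zero_le, iff_true]; exact ⟨U.isIrreducible, U.isClosed⟩
  | succ k ih =>
    intro U
    constructor
    · rintro ⟨_, V, hV, hk⟩
      let V' : IrreducibleCloseds X := ⟨V, hk.irr, hk.cl⟩
      have h1 := (ih V').1 hk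
      have h2 : V' < U := hV
      calc ((k+1 : ℕ) : ℕ∞) ≤ Order.height V' + 1 := by push_cast; gcongr
        _ ≤ Order.height U := Order.height_add_one_le h2
    · intro h
      obtain ⟨p, hp, hl⟩ := Order.exists_series_of_le_height U h
      refine ⟨⟨U.isIrreducible, U.isClosed⟩, (p.eraseLast.last : IrreducibleCloseds X), ?_, ?_⟩
      · have : p.eraseLast.last < p.last := p.eraseLast_last_rel_last (by omega)
        rw [hp] at this
        exact this
      · rw [ih]
        have := Order.length_le_height_last (p := p.eraseLast)
        refine le_trans ?_ this
        simp [hl]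

theorem irrDim_iff {k : ℕ} {U : Set X} (h1 : IsIrreducible U) (h2 : IsClosed U) :
    IrrDim k U ↔ (k : WithBot ℕ∞) ≤ setKrullDim inferInstance U := by
  let U' : IrreducibleCloseds X := ⟨U, h1, h2⟩
  have h := irrDim_iff_height (k := k) U'
  have e : setKrullDim inferInstance U = (Order.height U' : WithBot ℕ∞) := by
    rw [Order.height_eq_krullDim_Iic]
    exact Order.krullDim_eq_of_orderIso (icIso U')
  rw [e]
  rw [show U = (U' : Set X) from rfl, h]
  norm_cast

theorem irr_image2 {m : X → Y → Z} (h1 : ∀ x, Continuous (m x)) (h2 : ∀ y, Continuous (m · y))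
    {S : Set X} {T : Set Y} (hS : IsIrreducible S) (hT : IsIrreducible T) :
    IsIrreducible (Set.image2 m S T) := by
  refine ⟨hS.nonempty.image2 hT.nonempty, ?_⟩
  rintro u v hu hv ⟨_, ⟨s1, hs1, t1, ht1, rfl⟩, hu1⟩ ⟨_, ⟨s2, hs2, t2, ht2, rfl⟩, hv2⟩
  obtain ⟨s, hs, hsu, hsv⟩ := hS.isPreirreducible _ _ (hu.preimage (h2 t1)) (hv.preimage (h2 t2))
    ⟨s1, hs1, hu1⟩ ⟨s2, hs2, hv2⟩
  obtain ⟨t, ht, htu, htv⟩ := hT.isPreirreducible _ _ (hu.preimage (h1 s)) (hv.preimage (h1 s))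
    ⟨t1, ht1, hsu⟩ ⟨t2, ht2, hsv⟩
  exact ⟨_, ⟨s, hs, t, ht, rfl⟩, htu, htv⟩

/-- transport along a retraction pair -/
theorem irrDim_pull {φ : X → Y} {ψ : Y → X} (hφ : Continuous φ) (hψ : Continuous ψ)
    {k : ℕ} {T : Set Y} (hT : IrrDim k T) (h1 : ∀ x, ψ (φ x) = x) (h2 : ∀ y ∈ T, φ (ψ y) = y) :
    IrrDim k (φ ⁻¹' T) := by
  have key : ∀ V ⊆ T, φ ⁻¹' V = ψ '' V := by
    intro V hV
    ext x
    constructor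
    · intro hx; exact ⟨φ x, hx, h1 x⟩
    · rintro ⟨y, hy, rfl⟩
      show φ (ψ y) ∈ V
      rwa [h2 y (hV hy)]
  refine hT.map (fun V => φ ⁻¹' V) ?_ ?_
  · intro V hV h3 h4
    refine ⟨?_, h4.preimage hφ⟩
    rw [key V hV]
    exact h3.image _ hψ.continuousOn
  · intro V W hVW hW _ _ _ _
    refine ⟨Set.preimage_mono hVW.subset, ?_⟩
    obtain ⟨y, hy, hy'⟩ := Set.exists_of_ssubset hVW
    intro h
    apply hy'
    have := h (show ψ y ∈ φ ⁻¹' W by show φ (ψ y) ∈ W; rwa [h2 y (hW hy)])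
    change φ (ψ y) ∈ V at this
    rwa [h2 y (hW hy)] at this

theorem irrDim_push {φ : X → Y} {ψ : Y → X} (hφ : Continuous φ) (hψ : Continuous ψ)
    {k : ℕ} {T : Set X} (hT : IrrDim k T) (h1 : ∀ x ∈ T, ψ (φ x) = x)
    (h2 : IsClosed {y | φ (ψ y) = y}) : IrrDim k (φ '' T) := by
  have key : ∀ V ⊆ T, φ '' V = ψ ⁻¹' V ∩ {y | φ (ψ y) = y} := by
    intro V hV
    ext y
    constructor
    · rintro ⟨x, hx, rfl⟩
      refine ⟨?_, ?_⟩
      · show ψ (φ x) ∈ V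
        rwa [h1 x (hV hx)]
      · show φ (ψ (φ x)) = φ x
        rw [h1 x (hV hx)]
    · rintro ⟨hy, hy'⟩; exact ⟨ψ y, hy, hy'⟩
  refine hT.map (fun V => φ '' V) ?_ ?_
  · intro V hV h3 h4
    refine ⟨h3.image _ hφ.continuousOn, ?_⟩
    show IsClosed (φ '' V)
    rw [key V hV]
    exact (h4.preimage hψ).inter h2
  · intro V W hVW hW _ _ _ _
    refine ⟨Set.image_mono hVW.subset, ?_⟩
    obtain ⟨y, hy, hy'⟩ := Set.exists_of_ssubset hVW
    intro h
    apply hy'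
    obtain ⟨z, hz, hzy⟩ := h (Set.mem_image_of_mem φ hy)
    have e : z = y := by rw [← h1 z (hW (hVW.subset hz)), hzy, h1 y (hW hy)]
    rwa [← e]

theorem irr_sUnion {B : Set X} (hB : IsIrreducible B) {S : Set (Set X)} (hS : S.Finite)
    (hcl : ∀ A ∈ S, IsClosed A) (h : B ⊆ ⋃₀ S) : ∃ A ∈ S, B ⊆ A := by
  have := isIrreducible_iff_sUnion_isClosed.1 hB hS.toFinset
    (by simpa using hcl) (by simpa using h)
  simpa using this

section T1
variable [T1Space X]

theorem irrDim_one_of_infinite {U : Set X} (h : U.Infinite) (h1 : IsIrreducible U)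
    (h2 : IsClosed U) : IrrDim 1 U := by
  obtain ⟨x, hx⟩ := h.nonempty
  refine ⟨⟨h1, h2⟩, {x}, ⟨by simpa using hx, ?_⟩, isIrreducible_singleton, isClosed_singleton⟩
  intro h'
  exact h ((Set.finite_singleton x).subset h')

theorem irr_finite {U : Set X} (h : U.Finite) (h1 : IsIrreducible U) : ∃ x, U = {x} := by
  obtain ⟨A, hA, hUA⟩ := irr_sUnion h1 (h.image (fun x => ({x} : Set X)))
    (by rintro _ ⟨x, _, rfl⟩; exact isClosed_singleton)
    (fun x hx => ⟨{x}, ⟨x, hx, rfl⟩, rfl⟩)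
  obtain ⟨x, hx, rfl⟩ := hA
  exact ⟨x, hUA.antisymm (by simpa using hx)⟩

theorem IrrDim.infinite {U : Set X} (h : IrrDim 1 U) : U.Infinite := by
  intro hf
  obtain ⟨x, rfl⟩ := irr_finite hf h.irr
  obtain ⟨_, V, hV, hV'⟩ := h
  rcases Set.subset_singleton_iff_eq.1 hV.subset with h | h
  · exact hV'.ne.ne_empty h
  · exact hV.ne h

end T1

variable [NoetherianSpace X]

theorem decomp {A : Set X} (hA : IsClosed A) : ∃ S : Set (Set X), S.Finite ∧
    (∀ T ∈ S, IsClosed T) ∧ (∀ T ∈ S, IsIrreducible T) ∧ A = ⋃₀ S := by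
  obtain ⟨S, h1, h2, h3, h4⟩ := NoetherianSpace.exists_finite_set_isClosed_irreducible hA
  exact ⟨S, h1, fun T hT => (h2 T hT), fun T hT => (h3 T hT), h4⟩

theorem exists_comp {A B : Set X} (hA : IsClosed A) (hB : IsIrreducible B) (h : B ⊆ A) :
    ∃ T, IsIrredComponentOf inferInstance T A ∧ B ⊆ T ∧ IsClosed T := by
  obtain ⟨S, h1, h2, h3, h4⟩ := decomp hA
  obtain ⟨T, hBT, hT⟩ : ∃ T ∈ {T | T ∈ S ∧ B ⊆ T}, ∀ T' ∈ {T | T ∈ S ∧ B ⊆ T}, T ⊆ T' → T' ⊆ T := by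
    have hfin : {T | T ∈ S ∧ B ⊆ T}.Finite := h1.subset (fun T h => h.1)
    have hne : {T | T ∈ S ∧ B ⊆ T}.Nonempty := by
      obtain ⟨T, hT, hT'⟩ := irr_sUnion hB h1 h2 (h4 ▸ h)
      exact ⟨T, hT, hT'⟩
    obtain ⟨T, hT⟩ := hfin.exists_maximal hne
    exact ⟨T, hT.1, fun T' h' => hT.2 h'⟩
  refine ⟨T, ⟨⟨?_, h3 T hBT.1⟩, ?_⟩, hBT.2, h2 T hBT.1⟩
  · rw [h4]; exact Set.subset_sUnion_of_mem hBT.1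
  · rintro T' ⟨hT'A, hT'⟩ hTT'
    obtain ⟨T'', hT'', hle⟩ := irr_sUnion hT' h1 h2 (h4 ▸ hT'A)
    exact hle.trans (hT T'' ⟨hT'', hBT.2.trans (hTT'.trans hle)⟩ (hTT'.trans hle))

/-- Lemma P -/
theorem lemmaP {A B Y : Set X} (hA : IsClosed A) (hB : IsIrreducible B)
    (hY : B ⊆ closure Y)
    (h : ∀ v ∈ Y, ∃ R, IsIrreducible R ∧ v ∈ R ∧ R ⊆ A ∧ ¬ R ⊆ B) :
    ∃ A', IsIrreducible A' ∧ IsClosed A' ∧ B ⊂ A' ∧ A' ⊆ A := by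
  obtain ⟨S, h1, h2, h3, h4⟩ := decomp hA
  have hfin : {T | T ∈ S ∧ ¬ T ⊆ B}.Finite := h1.subset (fun T h => h.1)
  have hcl : IsClosed (⋃₀ {T | T ∈ S ∧ ¬ T ⊆ B}) := by
    rw [Set.sUnion_eq_biUnion]
    exact hfin.isClosed_biUnion (fun T hT => h2 T hT.1)
  have : B ⊆ ⋃₀ {T | T ∈ S ∧ ¬ T ⊆ B} := by
    refine hY.trans (closure_minimal ?_ hcl)
    intro v hv
    obtain ⟨R, hR, hvR, hRA, hRB⟩ := h v hv
    obtain ⟨T, hT, hRT⟩ := irr_sUnion hR h1 h2 (h4 ▸ hRA)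
    exact ⟨T, ⟨hT, fun hh => hRB (hRT.trans hh)⟩, hRT hvR⟩
  obtain ⟨T, hT, hBT⟩ := irr_sUnion hB hfin (fun T hT => h2 T hT.1) this
  exact ⟨T, h3 T hT.1, h2 T hT.1, ⟨hBT, hT.2⟩, h4 ▸ Set.subset_sUnion_of_mem hT.1⟩

theorem lemmaP' {G B : Set X} (hB : IsIrreducible B) (h : B ⊆ closure G) :
    ∃ A, IsIrreducible A ∧ IsClosed A ∧ B ⊆ A ∧ A ⊆ closure G ∧ (A ∩ G).Nonempty := by
  obtain ⟨S, h1, h2, h3, h4⟩ := decomp (isClosed_closure (s := G))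
  have hfin : {T | T ∈ S ∧ (T ∩ G).Nonempty}.Finite := h1.subset (fun T h => h.1)
  have hcl : IsClosed (⋃₀ {T | T ∈ S ∧ (T ∩ G).Nonempty}) := by
    rw [Set.sUnion_eq_biUnion]
    exact hfin.isClosed_biUnion (fun T hT => h2 T hT.1)
  have : B ⊆ ⋃₀ {T | T ∈ S ∧ (T ∩ G).Nonempty} := by
    refine h.trans (closure_minimal ?_ hcl)
    intro v hv
    obtain ⟨T, hT, hvT⟩ := (h4 ▸ subset_closure hv : v ∈ ⋃₀ S)
    exact ⟨T, ⟨hT, v, hvT, hv⟩, hvT⟩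
  obtain ⟨T, hT, hBT⟩ := irr_sUnion hB hfin (fun T hT => h2 T hT.1) this
  exact ⟨T, h3 T hT.1, h2 T hT.1, hBT, h4 ▸ Set.subset_sUnion_of_mem hT.1, hT.2⟩

variable [T1Space X]

/-- an infinite closed set contains an infinite irreducible closed subset,
and all but finitely many of its points lie in such a subset. -/
theorem cofinite_infinite_comp {A : Set X} (hA : IsClosed A) :
    {x ∈ A | ¬ ∃ R, IrrDim 1 R ∧ x ∈ R ∧ R ⊆ A}.Finite := by
  obtain ⟨S, h1, h2, h3, h4⟩ := decomp hA
  have : (⋃₀ {T | T ∈ S ∧ T.Finite}).Finite :=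
    Set.Finite.sUnion (h1.subset (fun T h => h.1)) (fun T hT => hT.2)
  refine this.subset ?_
  rintro x ⟨hx, hx'⟩
  obtain ⟨T, hT, hxT⟩ := (h4 ▸ hx : x ∈ ⋃₀ S)
  refine ⟨T, ⟨hT, ?_⟩, hxT⟩
  by_contra hinf
  exact hx' ⟨T, irrDim_one_of_infinite hinf (h3 T hT) (h2 T hT), hxT,
    h4 ▸ Set.subset_sUnion_of_mem hT⟩

end Gen
end PC

open Topology TopologicalSpace
set_option linter.style.haveILetI false
set_option linter.unusedVariables false

namespace PC

section Build
variable {K : Type*}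

/-- prepend a coordinate -/
def oc {ι : Type} (b : K) (a : ι → K) : Option ι → K := fun o => o.elim b a

@[simp] theorem oc_none {ι : Type} (b : K) (a : ι → K) : oc b a none = b := rfl
@[simp] theorem oc_some {ι : Type} (b : K) (a : ι → K) (i : ι) : oc b a (some i) = a i := rfl
@[simp] theorem oc_comp {ι : Type} (b : K) (a : ι → K) : oc b a ∘ some = a := rfl
theorem oc_eta {ι : Type} (z : Option ι → K) : oc (z none) (z ∘ some) = z := by
  funext o; cases o <;> rfl

/-- Zariski geometry with powers indexed by finite types, refining the Zariski topology. -/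
class ZG (K : Type*) [Field K] where
  top : ∀ (ι : Type) [Finite ι], TopologicalSpace (ι → K)
  noeth : ∀ (ι : Type) [Finite ι], @NoetherianSpace (ι → K) (top ι)
  cont : ∀ (ι κ : Type) [Finite ι] [Finite κ] (g : κ → ι ⊕ K),
    @Continuous _ _ (top ι) (top κ) (fun x i => Sum.elim (fun j => x j) id (g i))
  zar : ∀ (ι : Type) [Finite ι] (f : MvPolynomial ι K),
    IsClosed[top ι] {x | MvPolynomial.eval x f = 0}
  z1 : ∀ (ι : Type) [Finite ι] (C : Set (Option ι → K)), IsClosed[top (Option ι)] C → C.Nonempty →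
    ∃ F : Set (ι → K), IsClosed[top ι] F ∧ F ⊂ closure[top ι] ((fun x => x ∘ some) '' C) ∧
      closure[top ι] ((fun x => x ∘ some) '' C) \ F ⊆ (fun x => x ∘ some) '' C
  z2i : @IrreducibleSpace (Unit → K) (top Unit)
  z2 : ∀ (ι : Type) [Finite ι] (C : Set (Option ι → K)), IsClosed[top (Option ι)] C →
    ∃ m : ℕ, ∀ a : ι → K, {b | oc b a ∈ C} = Set.univ ∨
      ({b | oc b a ∈ C}.Finite ∧ {b | oc b a ∈ C}.ncard ≤ m)
  z3 : ∀ (ι : Type) [Finite ι] (U : Set (ι → K)) (i j : ι) (k : ℕ), @IrrDim _ (top ι) (k+1) U →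
    ∀ u ∈ U, u i = u j → ∃ T, @IrrDim _ (top ι) k T ∧ u ∈ T ∧ T ⊆ U ∧ ∀ x ∈ T, x i = x j

variable (Z : ZariskiGeometry K)

/-- induced topology -/
@[reducible] noncomputable def tt (ι : Type) [Finite ι] : TopologicalSpace (ι → K) :=
  TopologicalSpace.induced (fun x => x ∘ (Finite.equivFin ι).symm) (Z.τ (Nat.card ι))

theorem tt_cont (ι κ : Type) [Finite ι] [Finite κ] (g : κ → ι ⊕ K) :
    @Continuous _ _ (tt Z ι) (tt Z κ) (fun x i => Sum.elim (fun j => x j) id (g i)) := by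
  rw [continuous_induced_rng]
  letI := tt Z ι
  letI := Z.τ (Nat.card ι)
  letI := Z.τ (Nat.card κ)
  have h1 : Continuous (fun x : ι → K => x ∘ (Finite.equivFin ι).symm) := continuous_induced_dom
  have h2 := Z.Z0_cont (Nat.card ι) (Nat.card κ)
    (fun i => Sum.map (Finite.equivFin ι) id (g ((Finite.equivFin κ).symm i)))
  convert h2.comp h1 using 1
  funext x i
  simp only [Function.comp]
  cases g ((Finite.equivFin κ).symm i) <;> simp

theorem tt_contA {ι : Type} [Finite ι] {n : ℕ} (e : Fin n → ι) :
    @Continuous _ _ (tt Z ι) (Z.τ n) (fun x => x ∘ e) := by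
  letI := tt Z ι
  letI := Z.τ (Nat.card ι)
  letI := Z.τ n
  have h1 : Continuous (fun x : ι → K => x ∘ (Finite.equivFin ι).symm) := continuous_induced_dom
  have h2 := Z.Z0_cont (Nat.card ι) n (fun i => Sum.inl (Finite.equivFin ι (e i)))
  convert h2.comp h1 using 1
  funext x i
  simp

theorem tt_contB {ι : Type} [Finite ι] {n : ℕ} (e : ι → Fin n) :
    @Continuous _ _ (Z.τ n) (tt Z ι) (fun x => x ∘ e) := by
  rw [continuous_induced_rng]
  exact Z.Z0_cont n (Nat.card ι) (fun i => Sum.inl (e ((Finite.equivFin ι).symm i)))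

theorem tt_fin (n : ℕ) : tt Z (Fin n) = Z.τ n := by
  apply le_antisymm
  · rw [← continuous_id_iff_le]; exact tt_contA Z id
  · rw [← continuous_id_iff_le]; exact tt_contB Z id

/-- reindexing homeomorphism -/
def ttHomeo {ι : Type} [Finite ι] {n : ℕ} (e : ι ≃ Fin n) :
    @Homeomorph (ι → K) (Fin n → K) (tt Z ι) (Z.τ n) :=
  letI := tt Z ι
  letI := Z.τ n
  { toFun := fun x => x ∘ e.symm
    invFun := fun x => x ∘ e
    left_inv := fun x => by funext i; simp
    right_inv := fun x => by funext i; simp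
    continuous_toFun := tt_contA Z _
    continuous_invFun := tt_contB Z _ }

theorem fin_z3 (n : ℕ) (U : Set (Fin n → K)) (i j : Fin n) (k : ℕ) (hU : @IrrDim _ (Z.τ n) (k+1) U)
    (u) (hu : u ∈ U) (huij : u i = u j) :
    ∃ T, @IrrDim _ (Z.τ n) k T ∧ u ∈ T ∧ T ⊆ U ∧ ∀ x ∈ T, x i = x j := by
  letI := Z.τ n
  haveI := Z.noetherian n
  obtain ⟨T, hT, huT, hTc⟩ := exists_comp (A := U ∩ {x | x i = x j}) (B := {u})
    (hU.cl.inter (Z.Z0_diag n i j)) isIrreducible_singleton (by rintro _ rfl; exact ⟨hu, huij⟩)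
  have h3 := Z.Z3 n U i j hU.cl hU.irr T hT
  have h4 := (irrDim_iff hU.irr hU.cl).1 hU
  refine ⟨T, ?_, huT rfl, fun x hx => (hT.1.1 hx).1, fun x hx => (hT.1.1 hx).2⟩
  rw [irrDim_iff hT.1.2 hTc]
  have h5 := h4.trans h3
  change _ ≤ setKrullDim (Z.τ n) T
  generalize setKrullDim (Z.τ n) T = d at h5
  push_cast at h5
  cases d with
  | bot => simp at h5
  | coe d =>
    norm_cast at h5 ⊢
    exact (ENat.add_le_add_iff_right (by simp)).1 h5


/-- the main construction -/
@[reducible] noncomputable def mkZG {K : Type*} [Field K] (Z : ZariskiGeometry K)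
    (hrefine : ∀ (n : ℕ) (C : Set (Fin n → K)), ZariskiClosedSet K C → IsClosed[Z.τ n] C) :
    ZG K where
  top ι _ := tt Z ι
  noeth ι _ := by
    letI := tt Z ι
    letI := Z.τ (Nat.card ι)
    haveI := Z.noetherian (Nat.card ι)
    exact (Topology.IsInducing.mk rfl :
      Topology.IsInducing (fun x : ι → K => x ∘ (Finite.equivFin ι).symm)).noetherianSpace
  cont ι κ _ _ g := tt_cont Z ι κ g
  zar ι _ f := by
    letI := tt Z ι
    letI := Z.τ (Nat.card ι)
    have h1 := hrefine (Nat.card ι) {x | MvPolynomial.eval x (MvPolynomial.rename (Finite.equivFin ι) f) = 0}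
      ⟨{MvPolynomial.rename (Finite.equivFin ι) f}, by simp⟩
    have h2 := h1.preimage (tt_contA Z (Finite.equivFin ι).symm)
    convert h2 using 1
    ext x
    simp [MvPolynomial.eval_rename, Function.comp_assoc]
  z1 ι _ C hC hne := by
    let n := Nat.card ι
    let e : ι ≃ Fin n := Finite.equivFin ι
    let E : Option ι ≃ Fin (n+1) := (Equiv.optionCongr e).trans finSuccEquivLast.symm
    letI := tt Z ι
    letI := tt Z (Option ι)
    letI := Z.τ n
    letI := Z.τ (n+1)
    let h := ttHomeo Z e
    let H := ttHomeo Z E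
    obtain ⟨F, hF, hF1, hF2⟩ := Z.Z1 (n+1) n (by omega) (H.symm ⁻¹' C)
      (hC.preimage H.symm.continuous) (hne.preimage H.symm.surjective)
    have key : (fun x => x ∘ some) '' C =
        h ⁻¹' ((fun x => x ∘ Fin.castLE (by omega : n ≤ n+1)) '' (H.symm ⁻¹' C)) := by
      have hE : ∀ i, E.symm (Fin.castLE (by omega : n ≤ n+1) i) = some (e.symm i) := by
        intro i
        rw [Equiv.symm_apply_eq]
        simp [E]
        rfl
      have hcomm : ∀ x : Option ι → K, (H x) ∘ Fin.castLE (by omega : n ≤ n+1) = h (x ∘ some) := by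
        intro x
        funext i
        show x (E.symm _) = x (some (e.symm i))
        rw [hE]
      ext y
      constructor
      · rintro ⟨x, hx, rfl⟩
        exact ⟨H x, by simpa using hx, hcomm x⟩
      · rintro ⟨x, hx, hxy⟩
        refine ⟨H.symm x, hx, ?_⟩
        apply h.injective
        rw [← hxy]
        simp only
        rw [← hcomm]; simp
    refine ⟨h ⁻¹' F, hF.preimage h.continuous, ?_, ?_⟩
    · rw [key, ← h.preimage_closure]
      exact ⟨Set.preimage_mono hF1.1, fun hh => hF1.2 ((Set.preimage_subset_preimage_iff
        (by rw [h.surjective.range_eq]; exact Set.subset_univ _)).1 hh)⟩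
    · rw [key, ← h.preimage_closure]
      exact Set.preimage_mono hF2
  z2i := by
    letI := tt Z Unit
    letI := Z.τ 1
    haveI := Z.Z2_irred
    let h := ttHomeo Z (Equiv.ofUnique Unit (Fin 1))
    have := (IrreducibleSpace.isIrreducible_univ (Fin 1 → K)).image h.symm h.symm.continuous.continuousOn
    rw [Set.image_univ, h.symm.surjective.range_eq] at this
    exact irreducibleSpace_def _ |>.2 this
  z2 ι _ C hC := by
    let n := Nat.card ι
    let e : ι ≃ Fin n := Finite.equivFin ι
    let E : Option ι ≃ Fin (n+1) := (Equiv.optionCongr e).trans finSuccEquivLast.symm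
    letI := tt Z (Option ι)
    letI := Z.τ (n+1)
    let H := ttHomeo Z E
    obtain ⟨m, hm⟩ := Z.Z2 n (H.symm ⁻¹' C) (hC.preimage H.symm.continuous)
    refine ⟨m, fun a => ?_⟩
    have := hm (a ∘ e.symm)
    have key : ∀ b, H.symm (Fin.snoc (a ∘ e.symm) b) = oc b a := by
      intro b
      show (Fin.snoc (a ∘ e.symm) b : Fin (n+1) → K) ∘ E = _
      funext o
      cases o with
      | none => simp [E]
      | some i => simp [E]
    simpa [key] using this
  z3 ι _ U i j k hU u hu hij := by
    let n := Nat.card ι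
    let e : ι ≃ Fin n := Finite.equivFin ι
    letI := tt Z ι
    letI := Z.τ n
    let h := ttHomeo Z e
    have hU' : IrrDim (k+1) (h.symm ⁻¹' U) :=
      irrDim_pull h.symm.continuous h.continuous hU (by simp) (by simp)
    obtain ⟨T, hT, h1, h2, h3⟩ := fin_z3 Z n (h.symm ⁻¹' U) (e i) (e j) k hU' (h u) (by simpa using hu)
      (by show u (e.symm (e i)) = u (e.symm (e j)); simpa using hij)
    refine ⟨h ⁻¹' T, irrDim_pull h.continuous h.symm.continuous hT (by simp) (by simp), h1, ?_, ?_⟩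
    · intro x hx
      have := h2 hx
      simpa using this
    · intro x hx
      have := h3 _ hx
      change x (e.symm (e i)) = x (e.symm (e j)) at this
      simpa using this

end Build
end PC

open Topology TopologicalSpace
set_option linter.style.haveILetI false
set_option linter.unusedVariables false
set_option linter.unusedSectionVars false

namespace PC

attribute [instance] ZG.top
attribute [instance] ZG.noeth
attribute [instance] ZG.z2i

section Polys
variable {K : Type*} [Field K]


/-- polynomial functions -/
def Pol {ι : Type} (p : (ι → K) → K) : Prop := ∃ f : MvPolynomial ι K, ∀ x, MvPolynomial.eval x f = p x

theorem Pol.const {ι : Type} (c : K) : Pol (fun _ : ι → K => c) := ⟨MvPolynomial.C c, by simp⟩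
theorem Pol.proj {ι : Type} (i : ι) : Pol (fun x : ι → K => x i) := ⟨MvPolynomial.X i, by simp⟩
theorem Pol.add {ι : Type} {p q : (ι → K) → K} (hp : Pol p) (hq : Pol q) : Pol (fun x => p x + q x) := by
  obtain ⟨f, hf⟩ := hp; obtain ⟨g, hg⟩ := hq
  exact ⟨f + g, by simp [hf, hg]⟩
theorem Pol.sub {ι : Type} {p q : (ι → K) → K} (hp : Pol p) (hq : Pol q) : Pol (fun x => p x - q x) := by
  obtain ⟨f, hf⟩ := hp; obtain ⟨g, hg⟩ := hq
  exact ⟨f - g, by simp [hf, hg]⟩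
theorem Pol.mul {ι : Type} {p q : (ι → K) → K} (hp : Pol p) (hq : Pol q) : Pol (fun x => p x * q x) := by
  obtain ⟨f, hf⟩ := hp; obtain ⟨g, hg⟩ := hq
  exact ⟨f * g, by simp [hf, hg]⟩
theorem Pol.eval {ι κ : Type} (f : MvPolynomial κ K) {φ : (ι → K) → κ → K}
    (h : ∀ k, Pol (fun x => φ x k)) : Pol (fun x => MvPolynomial.eval (φ x) f) := by
  choose g hg using h
  refine ⟨MvPolynomial.bind₁ g f, fun x => ?_⟩
  have : φ x = fun k => MvPolynomial.eval x (g k) := by funext k; rw [hg]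
  show _ = MvPolynomial.eval (φ x) f
  rw [this]
  exact MvPolynomial.eval₂Hom_bind₁ _ _ _ _

/-- product sets -/
def prodSet {ι κ : Type} (F : Set (ι → K)) (B : Set (κ → K)) : Set (ι ⊕ κ → K) :=
  {z | z ∘ Sum.inl ∈ F ∧ z ∘ Sum.inr ∈ B}

theorem elim_mem_prodSet {ι κ : Type} {F : Set (ι → K)} {B : Set (κ → K)} {x : ι → K} {y : κ → K} :
    (Sum.elim x y ∈ prodSet F B) ↔ x ∈ F ∧ y ∈ B := by
  simp [prodSet]

end Polys

section Basic
variable {K : Type*} [Field K] [ZG K]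
variable {ι κ : Type} [Finite ι] [Finite κ]

theorem Pol.isClosed {p q : (ι → K) → K} (hp : Pol p) (hq : Pol q) : IsClosed {x | p x = q x} := by
  obtain ⟨f, hf⟩ := hp.sub hq
  have := ZG.zar ι f
  simp only [hf, sub_eq_zero] at this
  exact this

instance instT1 : T1Space (ι → K) := ⟨fun u => by
  have : ({u} : Set (ι → K)) = ⋂ i, {x | x i = u i} := by
    ext x; simp [funext_iff]
  rw [this]
  exact isClosed_iInter (fun i => (Pol.proj i).isClosed (Pol.const _))⟩

theorem cont_of {φ : (ι → K) → (κ → K)}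
    (h : ∀ k, (∃ i, ∀ x, φ x k = x i) ∨ (∃ c, ∀ x, φ x k = c)) : Continuous φ := by
  have : ∀ k, ∃ g : ι ⊕ K, ∀ x, φ x k = Sum.elim (fun j => x j) id g := by
    intro k
    rcases h k with ⟨i, hi⟩ | ⟨c, hc⟩
    · exact ⟨Sum.inl i, hi⟩
    · exact ⟨Sum.inr c, hc⟩
  choose g hg using this
  have e := ZG.cont (K := K) ι κ g
  convert e using 1
  funext x k
  exact hg k x

theorem cont_comp (e : κ → ι) : Continuous (fun x : ι → K => x ∘ e) :=
  cont_of (fun k => Or.inl ⟨e k, fun _ => rfl⟩)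

theorem cont_oc (b : K) : Continuous (fun x : ι → K => oc b x) :=
  cont_of (fun k => match k with
    | none => Or.inr ⟨b, fun _ => rfl⟩
    | some i => Or.inl ⟨i, fun _ => rfl⟩)

theorem fin_or_univ {φ : K → κ → K} (hφ : Continuous (fun z : Unit → K => φ (z ())))
    {D : Set (κ → K)} (hD : IsClosed D) : {b | φ b ∈ D} = Set.univ ∨ {b | φ b ∈ D}.Finite := by
  have h1 : Continuous (fun z : Option Empty → K => φ (z none)) :=
    hφ.comp (cont_comp (fun _ : Unit => (none : Option Empty)))
  obtain ⟨m, hm⟩ := ZG.z2 Empty _ (hD.preimage h1)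
  rcases hm Empty.elim with h | h
  · exact Or.inl h
  · exact Or.inr h.1

/-- closed sets of the line -/
theorem fin_or_univ' {φ : K → κ → K} (hφ : ∀ k, (∀ b, φ b k = b) ∨ (∃ c, ∀ b, φ b k = c))
    {D : Set (κ → K)} (hD : IsClosed D) : {b | φ b ∈ D} = Set.univ ∨ {b | φ b ∈ D}.Finite := by
  apply fin_or_univ _ hD
  apply cont_of
  intro k
  rcases hφ k with h | ⟨c, h⟩
  · exact Or.inl ⟨(), fun x => h _⟩
  · exact Or.inr ⟨c, fun x => h _⟩

theorem irrDim_univ : IrrDim (Nat.card ι) (Set.univ : Set (ι → K)) := by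
  suffices h : ∀ (ι : Type) [Finite ι], IrrDim (Nat.card ι) (Set.univ : Set (ι → K)) from h ι
  intro ι h
  refine Finite.induction_empty_option
    (P := fun ι => ∀ [Finite ι], IrrDim (Nat.card ι) (Set.univ : Set (ι → K))) ?_ ?_ ?_ ι
  · intro α β e ih hβ
    haveI : Finite α := Finite.of_equiv _ e.symm
    have := @ih this
    rw [← Nat.card_congr e]
    have h := irrDim_pull (cont_comp (K := K) e) (cont_comp (K := K) e.symm) this
      (fun x => by funext i; simp) (fun x _ => by funext i; simp)
    simpa using h
  · intro _
    rw [show Nat.card PEmpty.{1} = 0 by simp]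
    have : (Set.univ : Set (PEmpty.{1} → K)) = {PEmpty.elim} := by
      ext x; simp only [Set.mem_univ, Set.mem_singleton_iff, true_iff]; exact Subsingleton.elim _ _
    rw [this]
    exact ⟨isIrreducible_singleton, isClosed_singleton⟩
  · intro α _ ih _
    have ih' := @ih inferInstance
    rw [Finite.card_option]
    have h1 : {y : Option α → K | oc 0 (y ∘ some) = y} = {y | y none = 0} := by
      ext y
      constructor
      · intro h; have := congrFun h none; simpa using this.symm
      · intro h; funext o; cases o with
        | none => exact (h : y none = 0).symm
        | some i => rfl
    have h2 := irrDim_push (cont_oc (ι := α) (0 : K)) (cont_comp (some : α → Option α)) ih'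
      (fun x _ => rfl) (by rw [h1]; exact (Pol.proj _).isClosed (Pol.const _))
    refine h2.succ_of_ssubset ?_ ?_ isClosed_univ
    · refine ⟨Set.subset_univ _, fun h => ?_⟩
      obtain ⟨x, _, hx⟩ := h (Set.mem_univ (fun _ => (1 : K)))
      have := congrFun hx none
      simp at this
    · have := irr_image2 (m := fun (b : Unit → K) (a : α → K) => oc (b ()) a)
        (fun b => cont_oc _) (fun a => cont_of (fun k => match k with
          | none => Or.inl ⟨(), fun _ => rfl⟩
          | some i => Or.inr ⟨a i, fun _ => rfl⟩))
        (IrreducibleSpace.isIrreducible_univ (Unit → K)) ih'.irr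
      convert this
      symm
      rw [Set.eq_univ_iff_forall]
      intro z
      exact ⟨fun _ => z none, trivial, z ∘ some, trivial, oc_eta z⟩

theorem z3 {k : ℕ} {U : Set (ι → K)} (hU : IrrDim (k+1) U) {u : ι → K} (hu : u ∈ U) (i j : ι)
    (h : u i = u j) : ∃ T, IrrDim k T ∧ u ∈ T ∧ T ⊆ U ∧ ∀ x ∈ T, x i = x j :=
  ZG.z3 ι U i j k hU u hu h

theorem z3s {k : ℕ} {α : Type*} (p q : α → ι) (s : Finset α) : ∀ {U : Set (ι → K)},
    IrrDim (k+s.card) U → ∀ {u : ι → K}, u ∈ U →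
    (∀ c ∈ s, u (p c) = u (q c)) → ∃ T, IrrDim k T ∧ u ∈ T ∧ T ⊆ U ∧ ∀ x ∈ T, ∀ c ∈ s, x (p c) = x (q c) := by
  classical
  induction s using Finset.induction_on with
  | empty => intro U hU u hu _; exact ⟨U, by simpa using hU, hu, le_rfl, by simp⟩
  | insert a s ha ih =>
    intro U hU u hu h
    rw [Finset.card_insert_of_notMem ha, ← add_assoc] at hU
    obtain ⟨T, h1, h2, h3, h4⟩ := z3 hU hu (p a) (q a) (h a (by simp))
    obtain ⟨T', h1', h2', h3', h4'⟩ := ih h1 h2 (fun c hc => h c (by simp [hc]))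
    refine ⟨T', h1', h2', h3'.trans h3, ?_⟩
    intro x hx c hc
    rcases Finset.mem_insert.1 hc with rfl | hc
    · exact h4 x (h3' hx)
    · exact h4' x hx c hc

theorem z3c {k : ℕ} {U : Set (ι → K)} (hU : IrrDim (k+1) U) {u : ι → K} (hu : u ∈ U) (i : ι) :
    ∃ T, IrrDim k T ∧ u ∈ T ∧ T ⊆ U ∧ ∀ x ∈ T, x i = u i := by
  have h1 : {y : Option ι → K | oc (u i) (y ∘ some) = y} = {y | y none = u i} := by
    ext y
    constructor
    · intro h; have := congrFun h none; simpa using this.symm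
    · intro h; funext o; cases o with
      | none => exact (h : y none = u i).symm
      | some i => rfl
  have h2 := irrDim_push (cont_oc (ι := ι) (u i)) (cont_comp (some : ι → Option ι)) hU
      (fun x _ => rfl) (by rw [h1]; exact (Pol.proj _).isClosed (Pol.const _))
  obtain ⟨T, hT, h3, h4, h5⟩ := z3 h2 (Set.mem_image_of_mem _ hu) none (some i) rfl
  refine ⟨(fun x => oc (u i) x) ⁻¹' T, ?_, h3, ?_, ?_⟩
  · refine irrDim_pull (cont_oc (ι := ι) (u i)) (cont_comp (some : ι → Option ι)) hT (fun _ => rfl) ?_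
    intro y hy
    obtain ⟨x, hx, rfl⟩ := h4 hy
    rfl
  · intro x hx
    obtain ⟨x', hx', h⟩ := h4 hx
    have : x' = x := by have := congrArg (· ∘ some) h; simpa using this
    rwa [← this]
  · intro x hx
    exact (h5 _ hx).symm

theorem z3fix {k : ℕ} (s : Finset ι) : ∀ {U : Set (ι → K)},
    IrrDim (k+s.card) U → ∀ {u : ι → K}, u ∈ U →
    ∃ T, IrrDim k T ∧ u ∈ T ∧ T ⊆ U ∧ ∀ x ∈ T, ∀ c ∈ s, x c = u c := by
  classical
  induction s using Finset.induction_on with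
  | empty => intro U hU u hu; exact ⟨U, by simpa using hU, hu, le_rfl, by simp⟩
  | insert a s ha ih =>
    intro U hU u hu
    rw [Finset.card_insert_of_notMem ha, ← add_assoc] at hU
    obtain ⟨T, h1, h2, h3, h4⟩ := z3c hU hu a
    obtain ⟨T', h1', h2', h3', h4'⟩ := ih h1 h2
    refine ⟨T', h1', h2', h3'.trans h3, ?_⟩
    intro x hx c hc
    rcases Finset.mem_insert.1 hc with rfl | hc
    · exact h4 x (h3' hx)
    · exact h4' x hx c hc

theorem infinite_fix (s : Finset ι) {U : Set (ι → K)} (hU : IrrDim (s.card + 1) U) {u : ι → K}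
    (hu : u ∈ U) : {x ∈ U | ∀ c ∈ s, x c = u c}.Infinite := by
  rw [add_comm] at hU
  obtain ⟨T, h1, h2, h3, h4⟩ := z3fix s hU hu
  exact h1.infinite.mono (fun x hx => ⟨h3 hx, h4 x hx⟩)

theorem not_irrDim {U : Set (ι → K)} (hU : IrrDim (Nat.card ι + 1) U) : False := by
  classical
  haveI := Fintype.ofFinite ι
  obtain ⟨u, hu⟩ := hU.ne
  have := infinite_fix (Finset.univ) (U := U) (by simpa using hU) hu
  apply this
  refine (Set.finite_singleton u).subset ?_
  rintro x ⟨_, hx⟩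
  exact funext (fun i => hx i (Finset.mem_univ _))

theorem cont_elim_left (y : κ → K) : Continuous (fun x : ι → K => Sum.elim x y) :=
  cont_of (fun k => match k with
    | Sum.inl i => Or.inl ⟨i, fun _ => rfl⟩
    | Sum.inr i => Or.inr ⟨y i, fun _ => rfl⟩)

theorem cont_elim_right (x : ι → K) : Continuous (fun y : κ → K => Sum.elim x y) :=
  cont_of (fun k => match k with
    | Sum.inr i => Or.inl ⟨i, fun _ => rfl⟩
    | Sum.inl i => Or.inr ⟨x i, fun _ => rfl⟩)

theorem prod_ic {F : Set (ι → K)} {B : Set (κ → K)} (h1 : IsIrreducible F) (h2 : IsClosed F)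
    (h3 : IsIrreducible B) (h4 : IsClosed B) : IsIrreducible (prodSet F B) ∧ IsClosed (prodSet F B) := by
  constructor
  · have := irr_image2 (m := fun (x : ι → K) (y : κ → K) => (Sum.elim x y : ι ⊕ κ → K))
      (fun x => cont_elim_right x) (fun y => cont_elim_left y) h1 h3
    convert this
    ext z
    constructor
    · rintro ⟨h, h'⟩; exact ⟨_, h, _, h', Sum.elim_comp_inl_inr z⟩
    · rintro ⟨x, hx, y, hy, rfl⟩; exact elim_mem_prodSet.2 ⟨hx, hy⟩
  · exact (h2.preimage (cont_comp Sum.inl)).inter (h4.preimage (cont_comp Sum.inr))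

theorem irrDim_prod {a b : ℕ} : ∀ {F : Set (ι → K)} {B : Set (κ → K)}, IrrDim a F → IrrDim b B →
    IrrDim (a + b) (prodSet F B) := by
  induction a with
  | zero =>
    intro F B hF hB
    rw [zero_add]
    refine hB.map (fun V => prodSet F V) (fun V _ h1 h2 => prod_ic hF.irr hF.cl h1 h2) ?_
    intro V W hVW _ _ _ _ _
    obtain ⟨x, hx⟩ := hF.ne
    obtain ⟨y, hy, hy'⟩ := Set.exists_of_ssubset hVW
    refine ⟨fun z hz => ⟨hz.1, hVW.subset hz.2⟩, fun h => hy' ?_⟩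
    exact (elim_mem_prodSet.1 (h (elim_mem_prodSet.2 ⟨hx, hy⟩))).2
  | succ a ih =>
    intro F B hF hB
    obtain ⟨h0, V, hV, hk⟩ := hF
    have := ih hk hB
    obtain ⟨i1, i2⟩ := prod_ic h0.1 h0.2 hB.irr hB.cl
    rw [add_right_comm]
    refine this.succ_of_ssubset ?_ i1 i2
    obtain ⟨x, hx⟩ := hB.ne
    obtain ⟨y, hy, hy'⟩ := Set.exists_of_ssubset hV
    refine ⟨fun z hz => ⟨hV.subset hz.1, hz.2⟩, fun h => hy' ?_⟩
    exact (elim_mem_prodSet.1 (h (elim_mem_prodSet.2 ⟨hy, hx⟩))).1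

end Basic
end PC

open Topology TopologicalSpace
set_option linter.style.haveILetI false
set_option linter.unusedVariables false
set_option linter.unusedSectionVars false

namespace PC

section Poly
variable {K : Type*} [Field K] [IsAlgClosed K] [ZG K]
variable {ι κ : Type} [Finite ι] [Finite κ]

theorem lemmaN {Q : Set (ι ⊕ ι → K)} (hQ : IsClosed Q) {Y : Set (ι → K)} (hY : ∀ u, u ∈ closure Y)
    (h : ∀ u ∈ Y, ∃ R, IrrDim 1 R ∧ u ∈ R ∧ ∀ u' ∈ R, Sum.elim u u' ∈ Q) (u : ι → K) :
    ∃ R, IrrDim 1 R ∧ u ∈ R ∧ ∀ u' ∈ R, Sum.elim u u' ∈ Q := by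
  classical
  haveI := Fintype.ofFinite ι
  let d : (ι → K) → (ι ⊕ ι → K) := fun u => Sum.elim u u
  have hd : Continuous d := cont_of (fun k => match k with
    | Sum.inl i => Or.inl ⟨i, fun _ => rfl⟩
    | Sum.inr i => Or.inl ⟨i, fun _ => rfl⟩)
  have hcl : IsClosed {y : ι ⊕ ι → K | d (y ∘ Sum.inl) = y} := by
    have : {y : ι ⊕ ι → K | d (y ∘ Sum.inl) = y} = ⋂ i, {y | y (Sum.inl i) = y (Sum.inr i)} := by
      ext y
      simp only [Set.mem_ofPred_eq, Set.mem_iInter]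
      constructor
      · intro h i; exact congrFun h (Sum.inr i)
      · intro h; funext k; cases k with
        | inl i => rfl
        | inr i => exact h i
    rw [this]
    exact isClosed_iInter (fun i => (Pol.proj _).isClosed (Pol.proj _))
  have hΔ := irrDim_push hd (cont_comp Sum.inl) (irrDim_univ (K := K) (ι := ι)) (fun x _ => rfl) hcl
  obtain ⟨A', a1, a2, a3, a4⟩ := lemmaP (A := Q) (B := d '' Set.univ) (Y := d '' Y) hQ hΔ.irr (by
      refine subset_trans ?_ (image_closure_subset_closure_image hd)
      exact Set.image_mono (fun u _ => hY u)) (by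
      rintro _ ⟨v, hv, rfl⟩
      obtain ⟨R, h1, h2, h3⟩ := h v hv
      refine ⟨(fun u' => Sum.elim v u') '' R, h1.irr.image _ (cont_elim_right v).continuousOn,
        ⟨v, h2, rfl⟩, ?_, ?_⟩
      · rintro _ ⟨u', hu', rfl⟩; exact h3 u' hu'
      · intro hh
        apply h1.infinite
        refine (Set.finite_singleton v).subset ?_
        intro u' hu'
        obtain ⟨w, _, hw⟩ := hh ⟨u', hu', rfl⟩
        have e1 := congrArg (· ∘ Sum.inl) hw
        have e2 := congrArg (· ∘ Sum.inr) hw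
        simp only [d, Sum.elim_comp_inl, Sum.elim_comp_inr] at e1 e2
        rw [Set.mem_singleton_iff, ← e1, ← e2])
  have hA' := hΔ.succ_of_ssubset a3 a1 a2
  obtain ⟨T, t1, t2, t3, t4⟩ := z3fix (k := 1) (Finset.univ.map (Function.Embedding.inl : ι ↪ ι ⊕ ι)) (U := A')
    (by simpa [add_comm] using hA') (u := d u) (a3.subset ⟨u, trivial, rfl⟩)
  have ht : ∀ y ∈ T, Sum.elim u (y ∘ Sum.inr) = y := by
    intro y hy
    funext k
    cases k with
    | inl i => exact (t4 y hy (Sum.inl i) (by simp)).symm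
    | inr i => rfl
  refine ⟨(fun u' => Sum.elim u u') ⁻¹' T, ?_, t2, ?_⟩
  · exact irrDim_pull (cont_elim_right u) (cont_comp Sum.inr) t1 (fun _ => rfl) ht
  · intro u' hu'; exact a4 (t3 hu')

theorem dir_graph (f : MvPolynomial ι K) (i : ι) (u : Option ι → K) :
    ∃ R, IrrDim 1 R ∧ u ∈ R ∧ ∀ u' ∈ R, (∀ j, j ≠ i → u' (some j) = u (some j)) ∧
      u' none - MvPolynomial.eval (u' ∘ some) f = u none - MvPolynomial.eval (u ∘ some) f := by
  classical
  let Q : Set (Option ι ⊕ Option ι → K) := {z | (∀ j, j ≠ i → z (Sum.inr (some j)) = z (Sum.inl (some j))) ∧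
    z (Sum.inr none) - MvPolynomial.eval (fun j => z (Sum.inr (some j))) f =
      z (Sum.inl none) - MvPolynomial.eval (fun j => z (Sum.inl (some j))) f}
  have hQ : IsClosed Q := by
    have : Q = (⋂ j, ⋂ (_ : j ≠ i), {z | z (Sum.inr (some j)) = z (Sum.inl (some j))}) ∩
      {z | z (Sum.inr none) - MvPolynomial.eval (fun j => z (Sum.inr (some j))) f =
      z (Sum.inl none) - MvPolynomial.eval (fun j => z (Sum.inl (some j))) f} := by
      ext z; simp [Q]
    rw [this]
    refine (isClosed_iInter fun j => isClosed_iInter fun _ => (Pol.proj _).isClosed (Pol.proj _)).inter ?_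
    exact ((Pol.proj _).sub (Pol.eval f (fun k => Pol.proj _))).isClosed
      ((Pol.proj _).sub (Pol.eval f (fun k => Pol.proj _)))
  refine lemmaN hQ (Y := {u | ∃ R, IrrDim 1 R ∧ u ∈ R ∧ ∀ u' ∈ R, Sum.elim u u' ∈ Q}) ?_ (fun u h => h) u
  intro u0
  by_contra hu0
  set Y : Set (Option ι → K) := {u | ∃ R, IrrDim 1 R ∧ u ∈ R ∧ ∀ u' ∈ R, Sum.elim u u' ∈ Q} with hYdef
  let σ : K → K → Option ι → K := fun s z => oc z (Function.update (u0 ∘ some) i s)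
  let g : K → K := fun s => MvPolynomial.eval (Function.update (u0 ∘ some) i s) f
  have hσ0 : σ (u0 (some i)) (u0 none) = u0 := by
    show oc (u0 none) (Function.update (u0 ∘ some) i ((u0 ∘ some) i)) = u0
    rw [Function.update_eq_self]; exact oc_eta u0
  -- finitely many bad s for each c
  have hbad : ∀ c, {s | σ s (c + g s) ∉ closure Y}.Finite := by
    intro c
    let A : Set (Option ι → K) := {z | (∀ j, j ≠ i → z (some j) = u0 (some j)) ∧
      z none - MvPolynomial.eval (fun j => z (some j)) f = c}
    have hA : IsClosed A := by
      have : A = (⋂ j, ⋂ (_ : j ≠ i), {z | z (some j) = u0 (some j)}) ∩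
          {z | z none - MvPolynomial.eval (fun j => z (some j)) f = c} := by
        ext z; simp [A]
      rw [this]
      refine (isClosed_iInter fun j => isClosed_iInter fun _ => (Pol.proj _).isClosed (Pol.const _)).inter ?_
      exact ((Pol.proj _).sub (Pol.eval f (fun k => Pol.proj _))).isClosed (Pol.const _)
    have hfin := cofinite_infinite_comp hA
    refine Set.Finite.of_finite_image (f := fun s => σ s (c + g s)) (hfin.subset ?_) ?_
    · rintro _ ⟨s, hs, rfl⟩
      have hmem : σ s (c + g s) ∈ A := by
        refine ⟨fun j hj => ?_, ?_⟩
        · simp [σ, Function.update_of_ne hj]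
        · simp [σ, g]
      refine ⟨hmem, ?_⟩
      rintro ⟨R, hR, hmR, hRA⟩
      apply hs
      apply subset_closure
      refine ⟨R, hR, hmR, fun u' hu' => ?_⟩
      have h1 := hRA hu'
      refine ⟨fun j hj => ?_, ?_⟩
      · exact (h1.1 j hj).trans (hmem.1 j hj).symm
      · exact h1.2.trans hmem.2.symm
    · intro s _ s' _ h
      have := congrFun h (some i)
      simpa [σ] using this
  have hcontσ : Continuous (fun w : Option Unit → K => σ (w (some ())) (w none)) := by
    apply cont_of
    intro k
    cases k with
    | none => exact Or.inl ⟨none, fun _ => rfl⟩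
    | some j =>
      by_cases hj : j = i
      · subst hj; exact Or.inl ⟨some (), fun x => by simp [σ]⟩
      · exact Or.inr ⟨u0 (some j), fun x => by simp [σ, Function.update_of_ne hj]⟩
  obtain ⟨m, hm⟩ := ZG.z2 Unit _ ((isClosed_closure (s := Y)).preimage hcontσ)
  have hfull : {s | σ s (u0 none) ∈ closure Y}.Finite := by
    rcases fin_or_univ' (φ := fun s => σ s (u0 none)) (fun k => by
      cases k with
      | none => exact Or.inr ⟨_, fun _ => rfl⟩
      | some j =>
        by_cases hj : j = i
        · subst hj; exact Or.inl (fun x => by simp [σ])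
        · exact Or.inr ⟨u0 (some j), fun x => by simp [σ, Function.update_of_ne hj]⟩)
      (isClosed_closure (s := Y)) with h | h
    · exfalso
      have : u0 (some i) ∈ {s | σ s (u0 none) ∈ closure Y} := h ▸ trivial
      rw [Set.mem_ofPred_eq, hσ0] at this
      exact hu0 this
    · exact h
  haveI : Infinite K := inferInstance
  obtain ⟨cs, hcs⟩ := Infinite.exists_subset_card_eq K (m+1)
  have hfin2 : ({s | σ s (u0 none) ∈ closure Y} ∪ ⋃ c ∈ cs, {s | σ s (c + g s) ∉ closure Y}).Finite :=
    hfull.union (cs.finite_toSet.biUnion (fun c _ => hbad c))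
  obtain ⟨s, hs⟩ := hfin2.exists_notMem
  simp only [Set.mem_union, Set.mem_iUnion, not_or, not_exists, Set.mem_ofPred_eq, not_not] at hs
  rcases hm (fun _ => s) with h | h
  · have : u0 none ∈ {b | oc b (fun _ : Unit => s) ∈
      (fun w : Option Unit → K => σ (w (some ())) (w none)) ⁻¹' closure Y} := h ▸ trivial
    exact hs.1 this
  · have hsub : ((cs.image (fun c => c + g s) : Finset K) : Set K) ⊆ {b | oc b (fun _ : Unit => s) ∈
      (fun w : Option Unit → K => σ (w (some ())) (w none)) ⁻¹' closure Y} := by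
      intro b hb
      simp only [Finset.coe_image, Set.mem_image, Finset.mem_coe] at hb
      obtain ⟨c, hc, rfl⟩ := hb
      exact hs.2 c hc
    have h1 := Set.ncard_le_ncard hsub h.1
    rw [Set.ncard_coe_finset, Finset.card_image_of_injective _ (add_left_injective _), hcs] at h1
    have := h.2
    omega

theorem lemmaBuild {Γ : Set (Option ι → K)} (hΓ : IsClosed Γ)
    (hinj : ∀ v ∈ Γ, ∀ w ∈ Γ, v ∘ some = w ∘ some → v = w)
    (hdir : ∀ v ∈ Γ, ∀ i : ι, ∃ R, IrrDim 1 R ∧ v ∈ R ∧ R ⊆ Γ ∧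
      ∀ u ∈ R, ∀ j, j ≠ i → u (some j) = v (some j))
    (γ : Option ι → K) (hγ : γ ∈ Γ) : ∃ B, IrrDim (Nat.card ι) B ∧ γ ∈ B ∧ B ⊆ Γ := by
  classical
  haveI := Fintype.ofFinite ι
  suffices h : ∀ s : Finset ι, ∃ B, IrrDim s.card B ∧ γ ∈ B ∧ B ⊆ Γ ∧
      ∀ z ∈ B, ∀ j, j ∉ s → z (some j) = γ (some j) by
    obtain ⟨B, h1, h2, h3, _⟩ := h Finset.univ
    exact ⟨B, by simpa using h1, h2, h3⟩
  intro s
  induction s using Finset.induction_on with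
  | empty =>
    exact ⟨{γ}, ⟨isIrreducible_singleton, isClosed_singleton⟩, rfl, by simpa using hγ, by
      rintro _ rfl; simp⟩
  | insert i s his ih =>
    obtain ⟨B, h1, h2, h3, h4⟩ := ih
    rw [Finset.card_insert_of_notMem his]
    have hcl : IsClosed (Γ ∩ {z | ∀ j, j ∉ insert i s → z (some j) = γ (some j)}) := by
      refine hΓ.inter ?_
      have : {z : Option ι → K | ∀ j, j ∉ insert i s → z (some j) = γ (some j)} =
        ⋂ j, ⋂ (_ : j ∉ insert i s), {z | z (some j) = γ (some j)} := by
        ext z; simp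
      rw [this]
      exact isClosed_iInter fun j => isClosed_iInter fun _ => (Pol.proj _).isClosed (Pol.const _)
    obtain ⟨A', a1, a2, a3, a4⟩ := lemmaP (B := B) (Y := B) hcl h1.irr subset_closure (by
      intro v hv
      obtain ⟨R, r1, r2, r3, r4⟩ := hdir v (h3 hv) i
      refine ⟨R, r1.irr, r2, ?_, ?_⟩
      · intro u hu
        refine ⟨r3 hu, fun j hj => ?_⟩
        rw [Finset.mem_insert, not_or] at hj
        rw [r4 u hu j hj.1, h4 v hv j hj.2]
      · intro hRB
        apply r1.infinite
        refine (Set.finite_singleton v).subset ?_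
        intro u hu
        refine hinj u (r3 hu) v (h3 hv) ?_
        funext j
        show u (some j) = v (some j)
        by_cases hj : j = i
        · subst hj
          rw [h4 u (hRB hu) j his, h4 v hv j his]
        · exact r4 u hu j hj)
    exact ⟨A', h1.succ_of_ssubset a3 a1 a2, a3.subset h2, fun z hz => (a4 hz).1, fun z hz => (a4 hz).2⟩

theorem lemmaCont {Γ : Set (Option ι → K)} (hΓ : IsClosed Γ)
    (hinj : ∀ v ∈ Γ, ∀ w ∈ Γ, v ∘ some = w ∘ some → v = w)
    (hdim : ∀ γ ∈ Γ, ∃ B, IrrDim (Nat.card ι) B ∧ γ ∈ B ∧ B ⊆ Γ)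
    {E : Set (Option ι → K)} (hE : IsClosed E) (hEΓ : E ⊆ Γ) (γ : Option ι → K) (hγ : γ ∈ Γ)
    (h : γ ∘ some ∈ closure ((fun x => x ∘ some) '' E)) : γ ∈ E := by
  classical
  haveI := Fintype.ofFinite ι
  let π : (Option ι → K) → (ι → K) := fun x => x ∘ some
  have hπ : Continuous π := cont_comp some
  suffices H : ∀ F : Closeds (ι → K), ∀ E : Set (Option ι → K), IsClosed E → E ⊆ Γ → π '' E ⊆ F →
      ∀ γ ∈ Γ, π γ ∈ closure (π '' E) → γ ∈ E from
    H ⊤ E hE hEΓ (fun _ _ => trivial) γ hγ h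
  intro F
  have wf : WellFoundedLT (Closeds (ι → K)) := inferInstance
  induction F using wf.induction with
  | ind F IH =>
  intro E hE hEΓ hEF γ hγ h
  by_cases hcl : closure (π '' E) = F
  swap
  · let F' : Closeds (ι → K) := ⟨closure (π '' E), isClosed_closure⟩
    have hlt : F' < F := by
      refine lt_of_le_of_ne ?_ ?_
      · show closure (π '' E) ⊆ F
        exact closure_minimal hEF F.isClosed
      · intro e; apply hcl; rw [← e]; rfl
    exact IH F' hlt E hE hEΓ subset_closure γ hγ h
  have hπγF : π γ ∈ (F : Set (ι → K)) := hcl ▸ h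
  by_cases hirr : IsIrreducible (F : Set (ι → K))
  swap
  · have hnp : ¬ IsPreirreducible (F : Set (ι → K)) := fun hp => hirr ⟨⟨_, hπγF⟩, hp⟩
    rw [isPreirreducible_iff_isClosed_union_isClosed] at hnp
    push Not at hnp
    obtain ⟨z1, z2, hz1, hz2, hz, hn1, hn2⟩ := hnp
    have hEE : E = (E ∩ π ⁻¹' z1) ∪ (E ∩ π ⁻¹' z2) := by
      ext x
      constructor
      · intro hx
        rcases hz (hEF ⟨x, hx, rfl⟩) with h | h
        · exact Or.inl ⟨hx, h⟩
        · exact Or.inr ⟨hx, h⟩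
      · rintro (h | h) <;> exact h.1
    have key : ∀ z, IsClosed z → ¬ ((F : Set (ι → K)) ⊆ z) → π γ ∈ closure (π '' (E ∩ π ⁻¹' z)) → γ ∈ E := by
      intro z hz hn hh
      let F' : Closeds (ι → K) := ⟨F ∩ z, F.isClosed.inter hz⟩
      have hlt : F' < F := by
        refine lt_of_le_of_ne ?_ ?_
        · show (F : Set (ι → K)) ∩ z ⊆ F
          exact Set.inter_subset_left
        · intro e
          apply hn
          have e' : (F : Set (ι → K)) ∩ z = F := congrArg (fun c : Closeds (ι → K) => (c : Set (ι → K))) e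
          exact Set.inter_eq_left.1 e'
      refine (IH F' hlt (E ∩ π ⁻¹' z) (hE.inter (hz.preimage hπ)) (fun x hx => hEΓ hx.1) ?_ γ hγ hh).1
      rintro _ ⟨x, hx, rfl⟩
      exact ⟨hEF ⟨x, hx.1, rfl⟩, hx.2⟩
    rw [hEE, Set.image_union, closure_union] at h
    rcases h with h | h
    · exact key z1 hz1 hn1 h
    · exact key z2 hz2 hn2 h
  · have hEne : E.Nonempty := by
      by_contra hne
      rw [Set.not_nonempty_iff_eq_empty] at hne
      rw [hne] at h
      simp at h
    obtain ⟨G, hG, hGF, hGE⟩ := ZG.z1 ι E hE hEne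
    change G ⊂ closure (π '' E) at hGF
    change closure (π '' E) \ G ⊆ π '' E at hGE
    rw [hcl] at hGF hGE
    by_contra hγE
    obtain ⟨k, hk, hk1⟩ : ∃ k, IrrDim k (F : Set (ι → K)) ∧ ¬ IrrDim (k+1) (F : Set (ι → K)) := by
      by_contra hno
      push Not at hno
      have : ∀ k, IrrDim k (F : Set (ι → K)) := by
        intro k
        induction k with
        | zero => exact ⟨hirr, F.isClosed⟩
        | succ k ih => exact hno k ih
      exact not_irrDim (this _)
    obtain ⟨B, b1, b2, b3⟩ := hdim γ hγ
    have hprod := irrDim_prod hk b1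
    obtain ⟨T, t1, t2, t3, t4⟩ := z3s (k := k) (fun i : ι => (Sum.inl i : ι ⊕ Option ι))
      (fun i => Sum.inr (some i)) Finset.univ (by simpa using hprod)
      (u := Sum.elim (π γ) γ) (elim_mem_prodSet.2 ⟨hπγF, b2⟩) (fun c _ => rfl)
    let φ : (Option ι → K) → (ι ⊕ Option ι → K) := fun z => Sum.elim (π z) z
    have hφ : Continuous φ := cont_of (fun k => match k with
      | Sum.inl i => Or.inl ⟨some i, fun _ => rfl⟩
      | Sum.inr i => Or.inl ⟨i, fun _ => rfl⟩)
    have hW := irrDim_pull hφ (cont_comp Sum.inr) t1 (fun _ => rfl) (by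
      intro y hy
      funext c
      cases c with
      | inl i => exact (t4 y hy i (Finset.mem_univ _)).symm
      | inr i => rfl)
    have hWF : ∀ z ∈ φ ⁻¹' T, π z ∈ (F : Set (ι → K)) ∧ z ∈ B := fun z hz => elim_mem_prodSet.1 (t3 hz)
    have hsub : φ ⁻¹' T ⊆ E ∪ π ⁻¹' G := by
      intro z hz
      by_cases hzG : π z ∈ G
      · exact Or.inr hzG
      · left
        obtain ⟨e, he, hez⟩ := hGE ⟨(hWF z hz).1, hzG⟩
        rw [← hinj e (hEΓ he) z (b3 (hWF z hz).2) hez]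
        exact he
    have hWG : φ ⁻¹' T ⊆ π ⁻¹' G := by
      rcases isPreirreducible_iff_isClosed_union_isClosed.1 hW.irr.isPreirreducible E (π ⁻¹' G)
        hE (hG.preimage hπ) hsub with h | h
      · exact absurd (h t2) hγE
      · exact h
    have hGlt : (⟨G, hG⟩ : Closeds (ι → K)) < F := hGF
    have hcl' : IrrDim k (closure (π '' (φ ⁻¹' T))) := by
      refine hW.map (fun V => closure (π '' V)) ?_ ?_
      · intro V _ hV _
        exact ⟨(hV.image _ hπ.continuousOn).closure, isClosed_closure⟩
      · intro V W hVW hWT _ _ hVc _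
        refine ⟨closure_mono (Set.image_mono hVW.subset), fun hle => ?_⟩
        obtain ⟨w, hw, hwV⟩ := Set.exists_of_ssubset hVW
        apply hwV
        have hWΓ : W ⊆ Γ := fun x hx => b3 (hWF x (hWT hx)).2
        refine IH ⟨G, hG⟩ hGlt V hVc (hVW.subset.trans hWΓ) ?_ w (hWΓ hw)
          (hle (subset_closure ⟨w, hw, rfl⟩))
        rintro _ ⟨x, hx, rfl⟩
        exact hWG (hWT (hVW.subset hx))
    apply hk1
    refine hcl'.succ_of_ssubset ?_ hirr F.isClosed
    refine lt_of_le_of_lt ?_ hGF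
    refine closure_minimal ?_ hG
    rintro _ ⟨x, hx, rfl⟩
    exact hWG hx

theorem cont_graph {p : (ι → K) → K} (hp : Pol p) : Continuous (fun x => oc (p x) x) := by
  obtain ⟨f, hf⟩ := hp
  let Γ : Set (Option ι → K) := {z | z none - MvPolynomial.eval (z ∘ some) f = 0}
  have hΓ : IsClosed Γ := ((Pol.proj _).sub (Pol.eval f (fun k => Pol.proj _))).isClosed (Pol.const _)
  have hinj : ∀ v ∈ Γ, ∀ w ∈ Γ, v ∘ some = w ∘ some → v = w := by
    intro v hv w hw h
    rw [← oc_eta v, ← oc_eta w, h]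
    have h1 := sub_eq_zero.1 hv
    have h2 := sub_eq_zero.1 hw
    rw [h1, h2, h]
  have hdim := lemmaBuild hΓ hinj (by
    intro v hv i
    obtain ⟨R, h1, h2, h3⟩ := dir_graph f i v
    exact ⟨R, h1, h2, fun u hu => (h3 u hu).2.trans hv, fun u hu => (h3 u hu).1⟩)
  rw [continuous_iff_isClosed]
  intro D hD
  have hmem : ∀ x, oc (p x) x ∈ Γ := fun x => by
    show p x - MvPolynomial.eval x f = 0
    rw [hf, sub_self]
  apply isClosed_of_closure_subset
  intro x hx
  refine (lemmaCont hΓ hinj hdim (E := D ∩ Γ) (hD.inter hΓ) Set.inter_subset_right _ (hmem x) ?_).1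
  refine closure_mono ?_ hx
  intro y hy
  exact ⟨_, ⟨hy, hmem y⟩, rfl⟩

theorem cont_pol {φ : (ι → K) → κ → K} (h : ∀ k, Pol (fun x => φ x k)) : Continuous φ := by
  suffices H : ∀ (κ : Type) [Finite κ], ∀ (ι : Type) [Finite ι] (φ : (ι → K) → κ → K),
      (∀ k, Pol (fun x => φ x k)) → Continuous (fun x => (Sum.elim x (φ x) : ι ⊕ κ → K)) from
    (cont_comp (Sum.inr : κ → ι ⊕ κ)).comp (H κ ι φ h)
  intro κ _
  refine Finite.induction_empty_option
    (P := fun κ => ∀ [Finite κ], ∀ (ι : Type) [Finite ι] (φ : (ι → K) → κ → K),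
      (∀ k, Pol (fun x => φ x k)) → Continuous (fun x => (Sum.elim x (φ x) : ι ⊕ κ → K))) ?_ ?_ ?_ κ
  · intro α β e ih hβ ι _ φ h
    haveI : Finite α := Finite.of_equiv _ e.symm
    have h1 := ih ι (fun x a => φ x (e a)) (fun k => h (e k))
    have h2 := (cont_comp (K := K) (Sum.map id e.symm : ι ⊕ β → ι ⊕ α)).comp h1
    convert h2 using 1
    funext x k
    cases k with
    | inl i => rfl
    | inr i => simp
  · intro _ ι _ φ _
    exact cont_of (fun k => match k with
      | Sum.inl i => Or.inl ⟨i, fun _ => rfl⟩)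
  · intro α _ ih _ ι _ φ h
    have h1 := cont_graph (h none)
    have h2 := ih (Option ι) (fun y k => φ (y ∘ some) (some k)) (fun k => by
      obtain ⟨f, hf⟩ := h (some k)
      have := Pol.eval f (φ := fun (y : Option ι → K) => y ∘ some) (fun k => Pol.proj _)
      simpa only [hf] using this)
    have h3 := (cont_comp (K := K) (fun k : ι ⊕ Option α => match k with
      | Sum.inl i => (Sum.inl (some i) : Option ι ⊕ α)
      | Sum.inr none => Sum.inl none
      | Sum.inr (some a) => Sum.inr a)).comp (h2.comp h1)
    convert h3 using 1
    funext x k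
    rcases k with i | (_ | a) <;> rfl

end Poly
end PC

open Topology TopologicalSpace
set_option linter.style.haveILetI false
set_option linter.unusedVariables false
set_option linter.unusedSectionVars false

namespace PC

section Inv
variable {K : Type*} [Field K] [IsAlgClosed K] [ZG K]
variable {ι κ : Type} [Finite ι] [Finite κ]

theorem exists_hyp : ∃ (t : Set (Bool → K)), IrrDim 1 t ∧ ∀ h ∈ t, h false * h true = 1 := by
  have hcl : IsClosed {h : Bool → K | h false * h true = 1} :=
    ((Pol.proj _).mul (Pol.proj _)).isClosed (Pol.const _)
  have hfin := cofinite_infinite_comp hcl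
  have hinf : {h : Bool → K | h false * h true = 1}.Infinite := by
    intro hf
    have : ({0}ᶜ : Set K).Finite := by
      refine (hf.image (fun h => h true)).subset ?_
      intro s hs
      exact ⟨fun b => if b then s else s⁻¹, by simpa using inv_mul_cancel₀ hs, by simp⟩
    exact (Set.finite_singleton (0 : K)).infinite_compl this
  obtain ⟨x, hx, hx'⟩ := (hinf.sdiff hfin).nonempty
  by_contra hno
  apply hx'
  refine ⟨hx, ?_⟩
  rintro ⟨R, h1, h2, h3⟩
  exact hno ⟨R, h1, h3⟩

theorem inv_closure {D : Set (Option ι → K)} (hD : IsClosed D) (i : ι) {x : ι → K} (hx : x i ≠ 0)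
    (h : x ∈ closure {x | x i ≠ 0 ∧ oc (x i)⁻¹ x ∈ D}) : oc (x i)⁻¹ x ∈ D := by
  classical
  let Γ : Set (Option ι → K) := {z | z none * z (some i) = 1}
  have hΓ : IsClosed Γ := ((Pol.proj _).mul (Pol.proj _)).isClosed (Pol.const _)
  have hinj : ∀ v ∈ Γ, ∀ w ∈ Γ, v ∘ some = w ∘ some → v = w := by
    intro v hv w hw h
    rw [← oc_eta v, ← oc_eta w, h]
    have h1 := eq_inv_of_mul_eq_one_left hv
    have h2 := eq_inv_of_mul_eq_one_left hw
    have h3 : v (some i) = w (some i) := congrFun h i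
    rw [h1, h2, h3]
  have hdim := lemmaBuild hΓ hinj (by
    intro v hv j
    have hv' : v none * v (some i) = 1 := hv
    by_cases hj : j = i
    · subst hj
      obtain ⟨t, ht, hth⟩ := exists_hyp (K := K)
      obtain ⟨h0, hh0⟩ := ht.ne
      have hne : h0 true ≠ 0 := fun h => by have := hth h0 hh0; rw [h] at this; simp at this
      have hvne : v (some j) ≠ 0 := fun h => by rw [h] at hv'; simp at hv'
      let θ : (Bool → K) → (Option ι → K) := fun h => fun o => match o with
        | none => h false * (h0 true * v none)
        | some k => if k = j then h true * ((h0 true)⁻¹ * v (some j)) else v (some k)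
      have hθ : Continuous θ := by
        apply cont_pol
        intro k
        cases k with
        | none => exact (Pol.proj _).mul (Pol.const _)
        | some k =>
          by_cases hk : k = j
          · simp only [θ, hk, if_true]
            exact (Pol.proj _).mul (Pol.const _)
          · simp only [θ, hk, if_false]
            exact Pol.const _
      have hsub : closure (θ '' t) ⊆ Γ ∩ {u | ∀ k, k ≠ j → u (some k) = v (some k)} := by
        refine closure_minimal ?_ (hΓ.inter ?_)
        · rintro _ ⟨h, hh, rfl⟩
          refine ⟨?_, ?_⟩
          · show h false * (h0 true * v none) * (if j = j then h true * ((h0 true)⁻¹ * v (some j)) else _) = 1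
            rw [if_pos rfl]
            have := hth h hh
            calc _ = (h false * h true) * (v none * v (some j)) * (h0 true * (h0 true)⁻¹) := by ring
              _ = 1 := by rw [this, hv', mul_inv_cancel₀ hne]; ring
          · intro k hk
            show (if k = j then _ else v (some k)) = v (some k)
            rw [if_neg hk]
        · have : {u : Option ι → K | ∀ k, k ≠ j → u (some k) = v (some k)} =
            ⋂ k, ⋂ (_ : k ≠ j), {z | z (some k) = v (some k)} := by
            ext z; simp
          rw [this]
          exact isClosed_iInter fun j => isClosed_iInter fun _ => (Pol.proj _).isClosed (Pol.const _)
      refine ⟨closure (θ '' t), ?_, ?_, fun u hu => (hsub hu).1, fun u hu => (hsub hu).2⟩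
      · refine irrDim_one_of_infinite ?_ (ht.irr.image _ hθ.continuousOn).closure isClosed_closure
        refine Set.Infinite.mono subset_closure (ht.infinite.image ?_)
        intro a ha b hb hab
        have h1 := congrFun hab (some j)
        simp only [θ, if_true] at h1
        have h2 : a true = b true := mul_right_cancel₀ (mul_ne_zero (inv_ne_zero hne) hvne) h1
        have h3 : a false = b false := by
          rw [eq_inv_of_mul_eq_one_left (hth a ha), eq_inv_of_mul_eq_one_left (hth b hb), h2]
        funext c; cases c <;> assumption
      · apply subset_closure
        refine ⟨h0, hh0, ?_⟩
        funext o
        cases o with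
        | none =>
          show h0 false * (h0 true * v none) = v none
          rw [← mul_assoc, hth h0 hh0, one_mul]
        | some k =>
          show (if k = j then h0 true * ((h0 true)⁻¹ * v (some j)) else v (some k)) = v (some k)
          split_ifs with hk
          · rw [← mul_assoc, mul_inv_cancel₀ hne, one_mul, hk]
          · rfl
    · let θ : (Unit → K) → (Option ι → K) := fun h => Function.update v (some j) (h ())
      have hθ : Continuous θ := by
        apply cont_of
        intro k
        by_cases hk : k = some j
        · subst hk; exact Or.inl ⟨(), fun x => by simp [θ]⟩
        · exact Or.inr ⟨v k, fun x => by simp [θ, Function.update_of_ne hk]⟩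
      have hcl : IsClosed {y : Option ι → K | θ (fun _ => y (some j)) = y} := by
        have : {y : Option ι → K | θ (fun _ => y (some j)) = y} = ⋂ k, ⋂ (_ : k ≠ some j), {z | z k = v k} := by
          ext z
          simp only [Set.mem_ofPred_eq, Set.mem_iInter]
          constructor
          · intro h k hk
            have := congrFun h k
            simp only [θ, Function.update_of_ne hk] at this
            exact this.symm
          · intro h
            funext k
            by_cases hk : k = some j
            · subst hk; simp [θ]
            · simp only [θ, Function.update_of_ne hk]; exact (h k hk).symm
        rw [this]
        exact isClosed_iInter fun j => isClosed_iInter fun _ => (Pol.proj _).isClosed (Pol.const _)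
      have := irrDim_push hθ (cont_comp (K := K) (fun _ : Unit => some j)) (irrDim_univ (K := K) (ι := Unit))
        (fun x _ => by funext u; simp [θ]) hcl
      refine ⟨θ '' Set.univ, by simpa using this, ?_, ?_, ?_⟩
      · exact ⟨fun _ => v (some j), trivial, by simp [θ]⟩
      · rintro _ ⟨h, _, rfl⟩
        show θ h none * θ h (some i) = 1
        have : some i ≠ some j := fun h => hj (Option.some.inj h).symm
        simp only [θ, Function.update_of_ne this]
        simpa using hv'
      · rintro _ ⟨h, _, rfl⟩ k hk
        have : some k ≠ some j := fun h => hk (Option.some.inj h)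
        simp only [θ, Function.update_of_ne this])
  have hmem : ∀ x : ι → K, x i ≠ 0 → oc (x i)⁻¹ x ∈ Γ := fun x hx => inv_mul_cancel₀ hx
  refine (lemmaCont hΓ hinj hdim (E := D ∩ Γ) (hD.inter hΓ) Set.inter_subset_right _ (hmem x hx) ?_).1
  refine closure_mono ?_ h
  intro y hy
  exact ⟨_, ⟨hy.2, hmem y hy.1⟩, rfl⟩

end Inv
end PC

open Topology TopologicalSpace
set_option linter.style.haveILetI false
set_option linter.unusedVariables false
set_option linter.unusedSectionVars false

namespace PC

section Slope
variable {K : Type*} [Field K] [IsAlgClosed K] [ZG K]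
variable {ι κ : Type} [Finite ι] [Finite κ]

theorem fix_closed {φ : (ι → K) → (ι → K)} (h : ∀ k, Pol (fun x => φ x k)) : IsClosed {x | φ x = x} := by
  have : {x | φ x = x} = ⋂ k, {x | φ x k = x k} := by
    ext x; simp [funext_iff]
  rw [this]
  exact isClosed_iInter fun k => (h k).isClosed (Pol.proj k)

theorem sub_or_fin {C D : Set (ι → K)} (h1 : IrrDim 1 C) (h2 : ¬ IrrDim 2 C) (hD : IsClosed D) :
    C ⊆ D ∨ (C ∩ D).Finite := by
  by_contra hno
  push Not at hno
  obtain ⟨h3, h4⟩ := hno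
  have hfin := cofinite_infinite_comp (h1.cl.inter hD)
  obtain ⟨x, hx, hx'⟩ := (Set.Infinite.sdiff (h4 : (C ∩ D).Infinite) hfin).nonempty
  apply hx'
  refine ⟨hx, ?_⟩
  rintro ⟨R, r1, r2, r3⟩
  apply h2
  refine r1.succ_of_ssubset ⟨fun y hy => (r3 hy).1, fun hh => h3 (fun y hy => (r3 (hh hy)).2)⟩ h1.irr h1.cl

/-- cone generators -/
def coneSet (C : Set (Fin 2 → K)) : Set (Fin 3 → K) :=
  {z | ∃ p ∈ C, ∃ s : K, s ≠ 0 ∧ z = ![s * p 0, s * p 1, s]}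

/-- secant data -/
def secSet (C : Set (Fin 2 → K)) : Set (Fin 5 → K) :=
  {z | ![z 0, z 1] ∈ C ∧ ![z 2, z 3] ∈ C ∧ z 0 ≠ z 2 ∧ z 3 - z 1 = z 4 * (z 2 - z 0)}

theorem vec2_eta {α : Type*} (p : Fin 2 → α) : ![p 0, p 1] = p := by
  funext k; fin_cases k <;> rfl

variable {C : Set (Fin 2 → K)}

theorem cone_scale {z : Fin 3 → K} (hz : z ∈ closure (coneSet C)) {t : K} (ht : t ≠ 0) :
    ![t * z 0, t * z 1, t * z 2] ∈ closure (coneSet C) := by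
  have hc : Continuous (fun z : Fin 3 → K => ![t * z 0, t * z 1, t * z 2]) := by
    refine cont_pol (fun k => ?_)
    fin_cases k <;> exact (Pol.const _).mul (Pol.proj _)
  refine map_mem_closure (f := fun z : Fin 3 → K => ![t * z 0, t * z 1, t * z 2]) hc hz ?_
  rintro _ ⟨p, hp, s, hs, rfl⟩
  refine ⟨p, hp, t * s, mul_ne_zero ht hs, ?_⟩
  funext k; fin_cases k <;> simp [mul_assoc]

theorem cone_dehom (hC : IsClosed C) {z : Fin 3 → K} (hz : z ∈ closure (coneSet C)) (hz2 : z 2 ≠ 0) :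
    ![z 0 / z 2, z 1 / z 2] ∈ C := by
  have hc : Continuous (fun w : Option (Fin 3) → K => ![w none * w (some 0), w none * w (some 1)]) := by
    refine cont_pol (fun k => ?_)
    fin_cases k <;> exact (Pol.proj _).mul (Pol.proj _)
  have := inv_closure (hC.preimage hc) (2 : Fin 3) hz2 (closure_mono (by
    rintro _ ⟨p, hp, s, hs, rfl⟩
    refine ⟨hs, ?_⟩
    show ![_, _] ∈ C
    have h0 : s⁻¹ * (s * p 0) = p 0 := inv_mul_cancel_left₀ hs _
    have h1 : s⁻¹ * (s * p 1) = p 1 := inv_mul_cancel_left₀ hs _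
    simpa [h0, h1, vec2_eta] using hp) hz)
  change ![(z 2)⁻¹ * z 0, (z 2)⁻¹ * z 1] ∈ C at this
  rwa [div_eq_inv_mul, div_eq_inv_mul]

theorem slope_A1 (h1 : IrrDim 1 C) (hV : ∀ c, (C ∩ {p | p 0 = c}).Finite) :
    {a : K | ![1, a, 0] ∈ closure (coneSet C)}.Finite := by
  rcases fin_or_univ' (φ := fun a : K => ![1, a, 0]) (fun k => by
    fin_cases k
    · exact Or.inr ⟨1, fun _ => rfl⟩
    · exact Or.inl (fun _ => rfl)
    · exact Or.inr ⟨0, fun _ => rfl⟩) (isClosed_closure (s := coneSet C)) with h | h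
  swap
  · exact h
  exfalso
  have hX : ∀ X Y : K, X ≠ 0 → ![X, Y, 0] ∈ closure (coneSet C) := by
    intro X Y hX
    have h2 : Y / X ∈ {a : K | ![1, a, 0] ∈ closure (coneSet C)} := h ▸ trivial
    have h3 := cone_scale h2 hX
    convert h3 using 1
    funext k; fin_cases k
    · simp
    · simp [mul_div_cancel₀ _ hX]
    · simp
  have hXY : ∀ X Y : K, ![X, Y, 0] ∈ closure (coneSet C) := by
    intro X Y
    rcases fin_or_univ' (φ := fun a : K => ![a, Y, 0]) (fun k => by
      fin_cases k
      · exact Or.inl (fun _ => rfl)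
      · exact Or.inr ⟨Y, fun _ => rfl⟩
      · exact Or.inr ⟨0, fun _ => rfl⟩) (isClosed_closure (s := coneSet C)) with h | h
    · have : X ∈ {a : K | ![a, Y, 0] ∈ closure (coneSet C)} := h ▸ trivial
      exact this
    · exfalso
      have : ({0}ᶜ : Set K) ⊆ {a : K | ![a, Y, 0] ∈ closure (coneSet C)} := fun X hx => hX X Y hx
      exact (Set.finite_singleton (0 : K)).infinite_compl (h.subset this)
  let φ : (Fin 2 → K) → (Fin 3 → K) := fun p => ![p 0, p 1, 0]
  let ψ : (Fin 3 → K) → (Fin 2 → K) := fun z => ![z 0, z 1]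
  have hφ : Continuous φ := by
    refine cont_pol (fun k => ?_)
    fin_cases k
    · exact Pol.proj _
    · exact Pol.proj _
    · exact Pol.const _
  have hψ : Continuous ψ := by
    refine cont_pol (fun k => ?_)
    fin_cases k
    · exact Pol.proj _
    · exact Pol.proj _
  have hB := irrDim_push hφ hψ (irrDim_univ (K := K) (ι := Fin 2)) (fun x _ => vec2_eta x) (by
    refine fix_closed (φ := fun z => φ (ψ z)) (fun k => ?_)
    fin_cases k
    · exact Pol.proj _
    · exact Pol.proj _
    · exact Pol.const _)
  have hBC : φ '' Set.univ ⊆ closure (coneSet C) := by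
    rintro _ ⟨p, _, rfl⟩; exact hXY _ _
  obtain ⟨A, a1, a2, a3, a4, z, hzA, p, hp, s, hs, rfl⟩ := lemmaP' hB.irr hBC
  have hA : IrrDim 3 A := by
    have : IrrDim 2 (φ '' Set.univ) := by simpa only [Nat.card_fin] using hB
    refine this.succ_of_ssubset ⟨a3, fun hh => ?_⟩ a1 a2
    obtain ⟨q, _, hq⟩ := hh hzA
    have := congrFun hq 2
    exact hs this.symm
  have hinf := infinite_fix ({0, 2} : Finset (Fin 3)) (U := A) (by simpa using hA) hzA
  have hmap : Set.MapsTo (fun w : Fin 3 → K => (![w 0 / w 2, w 1 / w 2] : Fin 2 → K))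
      {x ∈ A | ∀ c ∈ ({0, 2} : Finset (Fin 3)), x c = (![s * p 0, s * p 1, s] : Fin 3 → K) c}
      (C ∩ {q | q 0 = p 0}) := by
    rintro w ⟨hw, hw'⟩
    have e0 := hw' 0 (by simp)
    have e2 := hw' 2 (by simp)
    simp at e0 e2
    refine ⟨cone_dehom h1.cl (a4 hw) (by rw [e2]; exact hs), ?_⟩
    show w 0 / w 2 = p 0
    rw [e0, e2, mul_div_cancel_left₀ _ hs]
  refine hinf (Set.Finite.of_finite_image ((hV (p 0)).subset hmap.image_subset) ?_)
  rintro w ⟨hw, hw'⟩ v ⟨hv, hv'⟩ hwv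
  have e0 := hw' 0 (by simp)
  have e2 := hw' 2 (by simp)
  have e0' := hv' 0 (by simp)
  have e2' := hv' 2 (by simp)
  simp at e0 e2 e0' e2'
  have e1 := congrFun hwv 1
  simp only [e2, e2'] at e1
  have e1' : w 1 / s = v 1 / s := e1
  rw [div_left_inj' hs] at e1'
  funext k; fin_cases k
  · exact e0.trans e0'.symm
  · exact e1'
  · exact e2.trans e2'.symm

theorem sec_sub (h1 : IsClosed C) {z : Fin 5 → K} (hz : z ∈ closure (secSet C)) :
    ![z 0, z 1] ∈ C ∧ ![z 2, z 3] ∈ C ∧ z 3 - z 1 = z 4 * (z 2 - z 0) := by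
  have hA : Continuous (fun z : Fin 5 → K => ![z 0, z 1]) := by
    refine cont_pol (fun k => ?_)
    fin_cases k <;> exact Pol.proj _
  have hB : Continuous (fun z : Fin 5 → K => ![z 2, z 3]) := by
    refine cont_pol (fun k => ?_)
    fin_cases k <;> exact Pol.proj _
  have hD : IsClosed {z : Fin 5 → K | z 3 - z 1 = z 4 * (z 2 - z 0)} :=
    ((Pol.proj _).sub (Pol.proj _)).isClosed ((Pol.proj _).mul ((Pol.proj _).sub (Pol.proj _)))
  have : closure (secSet C) ⊆ _ ∩ (_ ∩ _) :=
    closure_minimal (fun z hz => ⟨hz.1, hz.2.1, hz.2.2.2⟩) ((h1.preimage hA).inter ((h1.preimage hB).inter hD))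
  exact this hz

theorem slope_A2 (h1 : IrrDim 1 C) (hV : ∀ c, (C ∩ {p | p 0 = c}).Finite) :
    {a : K | ∀ p ∈ C, ![p 0, p 1, p 0, p 1, a] ∈ closure (secSet C)}.Finite := by
  by_cases hall : ∀ a : K, ∀ p ∈ C, ![p 0, p 1, p 0, p 1, a] ∈ closure (secSet C)
  swap
  · push Not at hall
    obtain ⟨a, p, hp, ha⟩ := hall
    rcases fin_or_univ' (φ := fun a : K => ![p 0, p 1, p 0, p 1, a]) (fun k => by
      fin_cases k
      · exact Or.inr ⟨_, fun _ => rfl⟩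
      · exact Or.inr ⟨_, fun _ => rfl⟩
      · exact Or.inr ⟨_, fun _ => rfl⟩
      · exact Or.inr ⟨_, fun _ => rfl⟩
      · exact Or.inl (fun _ => rfl)) (isClosed_closure (s := secSet C)) with h | h
    · exact absurd (h ▸ trivial : a ∈ {a : K | ![p 0, p 1, p 0, p 1, a] ∈ closure (secSet C)}) ha
    · exact h.subset (fun a ha => ha p hp)
  exfalso
  let φ : (Fin 2 ⊕ Unit → K) → (Fin 5 → K) := fun w =>
    ![w (Sum.inl 0), w (Sum.inl 1), w (Sum.inl 0), w (Sum.inl 1), w (Sum.inr ())]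
  let ψ : (Fin 5 → K) → (Fin 2 ⊕ Unit → K) := fun z => Sum.elim ![z 0, z 1] (fun _ => z 4)
  have hφ : Continuous φ := by
    refine cont_pol (fun k => ?_)
    fin_cases k <;> exact Pol.proj _
  have hψ : Continuous ψ := by
    refine cont_pol (fun k => ?_)
    rcases k with k | k
    · fin_cases k <;> exact Pol.proj _
    · exact Pol.proj _
  have hB := irrDim_push hφ hψ (irrDim_prod h1 (irrDim_univ (K := K) (ι := Unit))) (fun x _ => by
    funext k
    rcases k with k | k
    · fin_cases k <;> rfl
    · rfl) (by
    refine fix_closed (φ := fun z => φ (ψ z)) (fun k => ?_)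
    fin_cases k <;> exact Pol.proj _)
  set D := φ '' (prodSet C Set.univ) with hD
  have hDC : D ⊆ closure (secSet C) := by
    rintro _ ⟨w, hw, rfl⟩
    exact hall (w (Sum.inr ())) (w ∘ Sum.inl) hw.1
  obtain ⟨A, a1, a2, a3, a4, z, hzA, hz⟩ := lemmaP' hB.irr hDC
  have hA : IrrDim 3 A := by
    have : IrrDim 2 D := by simpa using hB
    refine this.succ_of_ssubset ⟨a3, fun hh => ?_⟩ a1 a2
    obtain ⟨w, _, rfl⟩ := hh hzA
    exact hz.2.2.1 rfl
  have hinf := infinite_fix ({0, 2} : Finset (Fin 5)) (U := A) (by simpa using hA) hzA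
  have hfin := (hV (z 0)).prod (hV (z 2))
  have hz02 := hz.2.2.1
  refine hinf (Set.Finite.of_finite_image (f := fun w : Fin 5 → K =>
    ((![w 0, w 1] : Fin 2 → K), (![w 2, w 3] : Fin 2 → K))) (hfin.subset ?_) ?_)
  · rintro _ ⟨w, ⟨hw, hw'⟩, rfl⟩
    obtain ⟨s1, s2, s3⟩ := sec_sub h1.cl (a4 hw)
    exact ⟨⟨s1, hw' 0 (by simp)⟩, ⟨s2, hw' 2 (by simp)⟩⟩
  · rintro w ⟨hw, hw'⟩ v ⟨hv, hv'⟩ hwv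
    obtain ⟨s1, s2, s3⟩ := sec_sub h1.cl (a4 hw)
    obtain ⟨t1, t2, t3⟩ := sec_sub h1.cl (a4 hv)
    have e0 : w 0 = v 0 := congrFun (congrArg Prod.fst hwv) 0
    have e1 : w 1 = v 1 := congrFun (congrArg Prod.fst hwv) 1
    have e2 : w 2 = v 2 := congrFun (congrArg Prod.snd hwv) 0
    have e3 : w 3 = v 3 := congrFun (congrArg Prod.snd hwv) 1
    have hne : v 2 - v 0 ≠ 0 := by
      rw [hv' 0 (by simp), hv' 2 (by simp)]
      exact sub_ne_zero.2 (Ne.symm hz02)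
    have e4 : w 4 = v 4 := by
      apply mul_right_cancel₀ hne
      rw [← t3, ← e0, ← e1, ← e2, ← e3, s3]
    funext k; fin_cases k <;> assumption

theorem exists_slope (h1 : IrrDim 1 C) (h2 : ¬ IrrDim 2 C) (hV : ∀ c, (C ∩ {p | p 0 = c}).Finite) :
    ∃ a : K, ![1, a, 0] ∉ closure (coneSet C) ∧
      {p ∈ C | ![p 0, p 1, p 0, p 1, a] ∈ closure (secSet C)}.Finite ∧
      ∀ b, (C ∩ {p | p 1 = a * p 0 + b}).Finite := by
  obtain ⟨a, ha⟩ := ((slope_A1 h1 hV).union (slope_A2 h1 hV)).exists_notMem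
  rw [Set.mem_union, not_or] at ha
  obtain ⟨ha1, ha2⟩ := ha
  refine ⟨a, ha1, ?_, ?_⟩
  · have hc : Continuous (fun p : Fin 2 → K => ![p 0, p 1, p 0, p 1, a]) := by
      refine cont_pol (fun k => ?_)
      fin_cases k
      · exact Pol.proj _
      · exact Pol.proj _
      · exact Pol.proj _
      · exact Pol.proj _
      · exact Pol.const _
    rcases sub_or_fin h1 h2 (isClosed_closure.preimage hc) with h | h
    · exact absurd (fun p hp => h hp) ha2
    · exact h
  · intro b
    have hL : IsClosed {p : Fin 2 → K | p 1 = a * p 0 + b} :=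
      (Pol.proj _).isClosed (((Pol.const _).mul (Pol.proj _)).add (Pol.const _))
    rcases sub_or_fin h1 h2 hL with h | h
    swap
    · exact h
    exfalso
    apply ha2
    intro p hp
    have hc : Continuous (fun q : Fin 2 → K => ![p 0, p 1, q 0, q 1, a]) := by
      refine cont_pol (fun k => ?_)
      fin_cases k
      · exact Pol.const _
      · exact Pol.const _
      · exact Pol.proj _
      · exact Pol.proj _
      · exact Pol.const _
    have hv : IsClosed {q : Fin 2 → K | q 0 = p 0} := (Pol.proj _).isClosed (Pol.const _)
    have hsub : C ⊆ ((fun q : Fin 2 → K => ![p 0, p 1, q 0, q 1, a]) ⁻¹' closure (secSet C)) ∪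
        {q : Fin 2 → K | q 0 = p 0} := by
      intro q hq
      by_cases hqp : q 0 = p 0
      · exact Or.inr hqp
      · left
        apply subset_closure
        refine ⟨?_, ?_, ?_, ?_⟩
        · simpa [vec2_eta] using hp
        · simpa [vec2_eta] using hq
        · exact fun h => hqp h.symm
        · have e1 : p 1 = a * p 0 + b := h hp
          have e2 : q 1 = a * q 0 + b := h hq
          show q 1 - p 1 = a * (q 0 - p 0)
          rw [e1, e2]; ring
    rcases isPreirreducible_iff_isClosed_union_isClosed.1 h1.irr.isPreirreducible _ _
      (isClosed_closure.preimage hc) hv hsub with h | h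
    · exact h hp
    · exact absurd ((hV (p 0)).subset (fun q hq => ⟨hq, h hq⟩)) h1.infinite

end Slope
end PC

open Topology TopologicalSpace
set_option linter.style.haveILetI false
set_option linter.unusedVariables false
set_option linter.unusedSectionVars false

namespace PC

section Main
open MvPolynomial
variable {K : Type*} [Field K]

theorem exists_linear_split (h : MvPolynomial (Fin 2) K) (p : Fin 2 → K) :
    ∃ A B : MvPolynomial (Fin 2) K, ∀ q, eval q h = eval p h + eval q A * (q 0 - p 0) + eval q B * (q 1 - p 1) := by
  induction h using MvPolynomial.induction_on with
  | C a => exact ⟨0, 0, by simp⟩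
  | add f g hf hg =>
    obtain ⟨A, B, hA⟩ := hf
    obtain ⟨A', B', hA'⟩ := hg
    refine ⟨A + A', B + B', fun q => ?_⟩
    simp only [map_add]
    rw [hA, hA']; ring
  | mul_X f i hf =>
    obtain ⟨A, B, hA⟩ := hf
    fin_cases i
    · refine ⟨A * X 0 + C (eval p f), B * X 0, fun q => ?_⟩
      simp only [map_mul, map_add, eval_X, eval_C, Fin.zero_eta]
      rw [hA]; ring
    · refine ⟨A * X 1, B * X 1 + C (eval p f), fun q => ?_⟩
      simp only [map_mul, map_add, eval_X, eval_C, Fin.mk_one]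
      rw [hA]; ring

/-- degree `d` homogenization -/
noncomputable def homog (d : ℕ) (h : MvPolynomial (Fin 2) K) : MvPolynomial (Fin 3) K :=
  ∑ m ∈ h.support, C (coeff m h) * (X 0 ^ (m 0) * X 1 ^ (m 1) * X 2 ^ (d - (m 0 + m 1)))

theorem homog_eval {d : ℕ} {h : MvPolynomial (Fin 2) K} (hd : h.totalDegree ≤ d) (p : Fin 2 → K) (s : K) :
    eval ![s * p 0, s * p 1, s] (homog d h) = s ^ d * eval p h := by
  rw [homog, map_sum, eval_eq', Finset.mul_sum]
  refine Finset.sum_congr rfl fun m hm => ?_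
  have h1 : m 0 + m 1 ≤ d := by
    have := (le_totalDegree hm).trans hd
    rwa [Finsupp.sum_fintype _ _ (fun _ => rfl), Fin.sum_univ_two] at this
  have h2 : s ^ d = s ^ (m 0) * s ^ (m 1) * s ^ (d - (m 0 + m 1)) := by
    rw [← pow_add, ← pow_add]; congr 1; omega
  simp only [map_mul, eval_C, map_pow, eval_X]
  rw [Fin.prod_univ_two, h2]
  simp [mul_pow]
  ring

/-- product of parallel lines -/
noncomputable def linP (a : K) (s : Finset K) : MvPolynomial (Fin 2) K :=
  ∏ b ∈ s, (X 1 - C a * X 0 - C b)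

noncomputable def linPh (a : K) (s : Finset K) : MvPolynomial (Fin 3) K :=
  ∏ b ∈ s, (X 1 - C a * X 0 - C b * X 2)

theorem linP_eval (a : K) (s : Finset K) (q : Fin 2 → K) :
    eval q (linP a s) = ∏ b ∈ s, (q 1 - a * q 0 - b) := by
  simp [linP, map_prod]

theorem linPh_eval (a : K) (s : Finset K) (q : Fin 3 → K) :
    eval q (linPh a s) = ∏ b ∈ s, (q 1 - a * q 0 - b * q 2) := by
  simp [linPh, map_prod]

theorem linPh_hom (a : K) (s : Finset K) (p : Fin 2 → K) (t : K) :
    eval ![t * p 0, t * p 1, t] (linPh a s) = t ^ s.card * eval p (linP a s) := by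
  rw [linPh_eval, linP_eval, ← Finset.prod_const, ← Finset.prod_mul_distrib]
  refine Finset.prod_congr rfl fun b hb => ?_
  simp
  ring

variable [IsAlgClosed K] [ZG K]
variable {C : Set (Fin 2 → K)}

/-- graph of `P/h` -/
def grSet (C : Set (Fin 2 → K)) (P h : MvPolynomial (Fin 2) K) : Set (Fin 3 → K) :=
  {z | ![z 1, z 2] ∈ C ∧ eval ![z 1, z 2] h ≠ 0 ∧ z 0 * eval ![z 1, z 2] h = eval ![z 1, z 2] P}

theorem pol12 (f : MvPolynomial (Fin 2) K) : Pol (fun z : Fin 3 → K => eval ![z 1, z 2] f) := by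
  refine Pol.eval f (φ := fun z : Fin 3 → K => ![z 1, z 2]) (fun k => ?_)
  fin_cases k <;> exact Pol.proj _

theorem local_tangent (h1 : IrrDim 1 C) (hV : ∀ c, (C ∩ {p | p 0 = c}).Finite) {a b : K} {s : Finset K}
    (hb : b ∈ s) {p : Fin 2 → K} (hp : p ∈ C) (hpb : p 1 = a * p 0 + b) {h : MvPolynomial (Fin 2) K}
    (hh : eval p h = 0) (hcl : ![0, p 0, p 1] ∈ closure (grSet C (linP a s) h)) :
    ![p 0, p 1, p 0, p 1, a] ∈ closure (secSet C) := by
  classical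
  obtain ⟨A, B, hAB⟩ := exists_linear_split h p
  let Q := linP a (s.erase b)
  have hQ : eval p Q ≠ 0 := by
    rw [linP_eval, Finset.prod_ne_zero_iff]
    intro c hc
    have := Finset.ne_of_mem_erase hc
    rw [hpb]
    intro h
    apply this
    linear_combination -h
  have hPQ : ∀ q, eval q (linP a s) = (q 1 - a * q 0 - b) * eval q Q := by
    intro q
    rw [linP_eval, linP_eval, Finset.mul_prod_erase s (fun b => q 1 - a * q 0 - b) hb]
  let W : (Fin 3 → K) → K := fun z => eval ![z 1, z 2] Q - z 0 * eval ![z 1, z 2] B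
  have hW : Pol W := (pol12 Q).sub ((Pol.proj 0).mul (pol12 B))
  have hG : IsClosed {z : Fin 3 → K | W z = 0} := hW.isClosed (Pol.const 0)
  have hfin : (grSet C (linP a s) h ∩ {z | z 1 = p 0}).Finite := by
    refine Set.Finite.of_finite_image (f := fun z : Fin 3 → K => (![z 1, z 2] : Fin 2 → K)) ((hV (p 0)).subset ?_) ?_
    · rintro _ ⟨z, ⟨hz, hz'⟩, rfl⟩
      exact ⟨hz.1, hz'⟩
    · rintro z ⟨hz, _⟩ y ⟨hy, _⟩ hzy
      simp only at hzy
      have e1 := congrFun hzy 0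
      have e2 := congrFun hzy 1
      have h3 := hz.2.2
      have h4 := hy.2.2
      rw [hzy, ← h4] at h3
      have e0 := mul_right_cancel₀ hy.2.1 h3
      funext k; fin_cases k <;> assumption
  have hmem : ![0, p 0, p 1] ∈ closure (grSet C (linP a s) h \ ({z | W z = 0} ∪ {z | z 1 = p 0})) := by
    have hsub : grSet C (linP a s) h ⊆ (grSet C (linP a s) h \ ({z | W z = 0} ∪ {z | z 1 = p 0})) ∪
        ({z | W z = 0} ∪ (grSet C (linP a s) h ∩ {z | z 1 = p 0})) := by
      intro z hz
      by_cases hz1 : W z = 0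
      · exact Or.inr (Or.inl hz1)
      by_cases hz2 : z 1 = p 0
      · exact Or.inr (Or.inr ⟨hz, hz2⟩)
      · exact Or.inl ⟨hz, fun h => h.elim hz1 hz2⟩
    have := closure_mono hsub hcl
    rw [closure_union, (hG.union hfin.isClosed).closure_eq] at this
    rcases this with h | h | h
    · exact h
    · exfalso
      have : W ![0, p 0, p 1] = 0 := h
      simp [W, vec2_eta] at this
      exact hQ this
    · exfalso
      have := h.1.2.1
      simp [vec2_eta] at this
      exact this hh
  let θ : (Fin 3 → K) → (Fin 4 → K) := fun z => ![z 0, z 1, z 2, W z]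
  have hθ : Continuous θ := by
    refine cont_pol (fun k => ?_)
    fin_cases k
    · exact Pol.proj _
    · exact Pol.proj _
    · exact Pol.proj _
    · exact hW
  let N : (Option (Fin 4) → K) → (Fin 5 → K) := fun v =>
    ![p 0, p 1, v (some 1), v (some 2), (a * eval ![v (some 1), v (some 2)] Q +
      v (some 0) * eval ![v (some 1), v (some 2)] A) * v none]
  have polv : ∀ f : MvPolynomial (Fin 2) K, Pol (fun v : Option (Fin 4) → K => eval ![v (some 1), v (some 2)] f) := by
    intro f
    refine Pol.eval f (φ := fun v : Option (Fin 4) → K => ![v (some 1), v (some 2)]) (fun k => ?_)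
    fin_cases k <;> exact Pol.proj _
  have hN : Continuous N := by
    refine cont_pol (fun k => ?_)
    fin_cases k
    · exact Pol.const _
    · exact Pol.const _
    · exact Pol.proj _
    · exact Pol.proj _
    · exact (((Pol.const a).mul (polv Q)).add ((Pol.proj _).mul (polv A))).mul (Pol.proj _)
  have hW0 : W ![0, p 0, p 1] = eval p Q := by simp [W, vec2_eta]
  have key := inv_closure (isClosed_closure (s := secSet C) |>.preimage hN) (3 : Fin 4) (x := θ ![0, p 0, p 1])
    (by show W ![0, p 0, p 1] ≠ 0; rw [hW0]; exact hQ) (map_mem_closure hθ hmem (by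
      rintro z ⟨hz, hz'⟩
      rw [Set.mem_union, not_or] at hz'
      obtain ⟨hz1, hz2⟩ := hz'
      refine ⟨hz1, subset_closure ?_⟩
      refine ⟨?_, hz.1, fun h => hz2 h.symm, ?_⟩
      · show ![p 0, p 1] ∈ C
        rwa [vec2_eta]
      · show z 2 - p 1 = (a * eval ![z 1, z 2] Q + z 0 * eval ![z 1, z 2] A) * (W z)⁻¹ * (z 1 - p 0)
        have e1 := hz.2.2
        rw [hPQ, hAB, hh] at e1
        simp only [Matrix.cons_val_zero, Matrix.cons_val_one] at e1
        have hz1' : W z ≠ 0 := hz1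
        field_simp
        simp only [W]
        linear_combination (-1 : K) * e1 + (- (eval ![z 1, z 2] Q)) * hpb))
  have e : N (oc (θ ![0, p 0, p 1] 3)⁻¹ (θ ![0, p 0, p 1])) = ![p 0, p 1, p 0, p 1, a] := by
    show ![p 0, p 1, p 0, p 1, (a * eval ![p 0, p 1] Q + 0 * eval ![p 0, p 1] A) * (W ![0, p 0, p 1])⁻¹] = _
    rw [hW0, vec2_eta, zero_mul, add_zero, mul_assoc, mul_inv_cancel₀ hQ, mul_one]
  rw [← e]
  exact key

theorem main_inf (h1 : IrrDim 1 C) (P h : MvPolynomial (Fin 2) K)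
    (hinf : {w | ∃ p ∈ C, eval p h ≠ 0 ∧ w = eval p P / eval p h}.Infinite) :
    ∃ z ∈ closure {z : Fin 4 → K | ∃ p ∈ C, eval p h ≠ 0 ∧ ∃ s : K, s ≠ 0 ∧
      z = ![eval p P / eval p h, s * p 0, s * p 1, s]}, z 0 = 0 ∧ z ≠ 0 := by
  set V := {z : Fin 4 → K | ∃ p ∈ C, eval p h ≠ 0 ∧ ∃ s : K, s ≠ 0 ∧
      z = ![eval p P / eval p h, s * p 0, s * p 1, s]} with hVdef
  have hw : ∀ p ∈ C, eval p h ≠ 0 → ![eval p P / eval p h, 0, 0, 0] ∈ closure V := by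
    intro p hp hph
    rcases fin_or_univ (φ := fun s : K => ![eval p P / eval p h, s * p 0, s * p 1, s]) (by
      refine cont_pol (fun k => ?_)
      fin_cases k
      · exact Pol.const _
      · exact (Pol.proj _).mul (Pol.const _)
      · exact (Pol.proj _).mul (Pol.const _)
      · exact Pol.proj _) (isClosed_closure (s := V)) with h' | h'
    · have : (0 : K) ∈ {s : K | ![eval p P / eval p h, s * p 0, s * p 1, s] ∈ closure V} := h' ▸ trivial
      simpa using this
    · exfalso
      have : ({0}ᶜ : Set K) ⊆ {s : K | ![eval p P / eval p h, s * p 0, s * p 1, s] ∈ closure V} :=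
        fun s hs => subset_closure ⟨p, hp, hph, s, hs, rfl⟩
      exact (Set.finite_singleton (0 : K)).infinite_compl (h'.subset this)
  have hall : ∀ w : K, ![w, 0, 0, 0] ∈ closure V := by
    rcases fin_or_univ' (φ := fun w : K => ![w, 0, 0, 0]) (fun k => by
      fin_cases k
      · exact Or.inl (fun _ => rfl)
      · exact Or.inr ⟨0, fun _ => rfl⟩
      · exact Or.inr ⟨0, fun _ => rfl⟩
      · exact Or.inr ⟨0, fun _ => rfl⟩) (isClosed_closure (s := V)) with h | h
    · intro w
      have : w ∈ {w : K | ![w, 0, 0, 0] ∈ closure V} := h ▸ trivial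
      exact this
    · exfalso
      refine hinf (h.subset ?_)
      rintro _ ⟨p, hp, hph, rfl⟩
      exact hw p hp hph
  let φ : (Unit → K) → (Fin 4 → K) := fun z => ![z (), 0, 0, 0]
  have hφ : Continuous φ := by
    refine cont_pol (fun k => ?_)
    fin_cases k
    · exact Pol.proj _
    · exact Pol.const _
    · exact Pol.const _
    · exact Pol.const _
  have hB := irrDim_push hφ (cont_comp (K := K) (fun _ : Unit => (0 : Fin 4))) (irrDim_univ (K := K) (ι := Unit))
    (fun x _ => rfl) (by
    refine fix_closed (φ := fun z => φ (z ∘ fun _ => 0)) (fun k => ?_)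
    fin_cases k
    · exact Pol.proj _
    · exact Pol.const _
    · exact Pol.const _
    · exact Pol.const _)
  have hBC : φ '' Set.univ ⊆ closure V := by
    rintro _ ⟨w, _, rfl⟩; exact hall _
  obtain ⟨A, a1, a2, a3, a4, z, hzA, p, hp, hph, s, hs, rfl⟩ := lemmaP' hB.irr hBC
  have hA : IrrDim 2 A := by
    have : IrrDim 1 (φ '' Set.univ) := by simpa using hB
    refine this.succ_of_ssubset ⟨a3, fun hh => ?_⟩ a1 a2
    obtain ⟨q, _, hq⟩ := hh hzA
    exact hs (congrFun hq 3).symm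
  obtain ⟨T, t1, t2, t3, t4⟩ := z3c (k := 1) hA (a3 ⟨fun _ => 0, trivial, rfl⟩) 0
  obtain ⟨z, hz, hz'⟩ := t1.infinite.exists_notMem_finset {0}
  exact ⟨z, a4 (t3 hz), t4 z hz, by simpa using hz'⟩

theorem main_lemma (h1 : IrrDim 1 C) (hV : ∀ c, (C ∩ {p | p 0 = c}).Finite) {a : K}
    (ha : ![1, a, 0] ∉ closure (coneSet C)) (hL : ∀ b, (C ∩ {p | p 1 = a * p 0 + b}).Finite)
    {s : Finset K} (hs : ∀ b ∈ s, ∀ p ∈ C, p 1 = a * p 0 + b → ![p 0, p 1, p 0, p 1, a] ∉ closure (secSet C))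
    {h : MvPolynomial (Fin 2) K} (hd : h.totalDegree ≤ s.card)
    (hh : ∀ b ∈ s, ∀ p ∈ C, p 1 = a * p 0 + b → eval p h = 0) :
    ∃ c : K, ∀ p ∈ C, eval p h = c * eval p (linP a s) := by
  classical
  by_cases hz : ∀ p ∈ C, eval p h = 0
  · exact ⟨0, fun p hp => by simp [hz p hp]⟩
  have polf : ∀ f : MvPolynomial (Fin 2) K, Pol (fun p : Fin 2 → K => eval p f) := fun f => ⟨f, fun _ => rfl⟩
  by_cases hfin : {w | ∃ p ∈ C, eval p h ≠ 0 ∧ w = eval p (linP a s) / eval p h}.Finite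
  · obtain ⟨z, hz1, hz2⟩ := isIrreducible_iff_sUnion_isClosed.1 h1.irr
      (insert {p | eval p h = 0} (hfin.toFinset.image (fun w => {p | eval p (linP a s) = w * eval p h}))) (by
        intro z hz
        simp only [Finset.mem_insert, Finset.mem_image] at hz
        rcases hz with rfl | ⟨w, _, rfl⟩
        · exact (polf h).isClosed (Pol.const 0)
        · exact (polf _).isClosed ((Pol.const w).mul (polf h))) (by
        intro p hp
        by_cases hph : eval p h = 0
        · exact ⟨{p | eval p h = 0}, Finset.mem_coe.2 (Finset.mem_insert_self _ _), hph⟩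
        · refine ⟨{q | eval q (linP a s) = (eval p (linP a s) / eval p h) * eval q h}, ?_, ?_⟩
          · simp only [Finset.coe_insert, Finset.coe_image, Set.mem_insert_iff, Set.mem_image]
            right
            exact ⟨_, by simpa using ⟨p, hp, hph, rfl⟩, rfl⟩
          · show _ = _
            rw [div_mul_cancel₀ _ hph])
    simp only [Finset.mem_insert, Finset.mem_image] at hz1
    rcases hz1 with rfl | ⟨w, _, rfl⟩
    · exact absurd (fun p hp => hz2 hp) hz
    · by_cases hw : w = 0
      · exfalso
        subst hw
        apply h1.infinite
        refine (Set.Finite.biUnion s.finite_toSet (fun b _ => hL b)).subset ?_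
        intro p hp
        have : eval p (linP a s) = 0 * eval p h := hz2 hp
        rw [zero_mul, linP_eval, Finset.prod_eq_zero_iff] at this
        obtain ⟨b, hb, hb'⟩ := this
        rw [Set.mem_iUnion₂]
        refine ⟨b, hb, hp, ?_⟩
        show p 1 = a * p 0 + b
        linear_combination hb'
      · refine ⟨w⁻¹, fun p hp => ?_⟩
        have : eval p (linP a s) = w * eval p h := hz2 hp
        rw [this, inv_mul_cancel_left₀ hw]
  exfalso
  obtain ⟨z, hz1, hz0, hzne⟩ := main_inf h1 (linP a s) h hfin
  have hc3 : Continuous (fun z : Fin 4 → K => ![z 1, z 2, z 3]) := by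
    refine cont_pol (fun k => ?_)
    fin_cases k <;> exact Pol.proj _
  have hcone : ![z 1, z 2, z 3] ∈ closure (coneSet C) := by
    refine map_mem_closure (f := fun z : Fin 4 → K => ![z 1, z 2, z 3]) hc3 hz1 ?_
    rintro _ ⟨p, hp, hph, t, ht, rfl⟩
    exact ⟨p, hp, t, ht, rfl⟩
  have polg : ∀ f : MvPolynomial (Fin 3) K, Pol (fun z : Fin 4 → K => eval ![z 1, z 2, z 3] f) := by
    intro f
    refine Pol.eval f (φ := fun z : Fin 4 → K => ![z 1, z 2, z 3]) (fun k => ?_)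
    fin_cases k <;> exact Pol.proj _
  have heq : z 0 * eval ![z 1, z 2, z 3] (homog s.card h) = eval ![z 1, z 2, z 3] (linPh a s) := by
    have hcl := ((Pol.proj 0).mul (polg (homog s.card h))).isClosed (polg (linPh a s))
    refine closure_minimal ?_ hcl hz1
    rintro _ ⟨p, hp, hph, t, ht, rfl⟩
    show (eval p (linP a s) / eval p h) * eval ![t * p 0, t * p 1, t] (homog s.card h) =
      eval ![t * p 0, t * p 1, t] (linPh a s)
    rw [homog_eval hd, linPh_hom]
    field_simp
  rw [hz0, zero_mul, linPh_eval, eq_comm, Finset.prod_eq_zero_iff] at heq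
  obtain ⟨b, hb, hb'⟩ := heq
  replace hb' : z 2 - a * z 1 - b * z 3 = 0 := hb'
  by_cases hS : z 3 = 0
  · rw [hS, mul_zero, sub_zero, sub_eq_zero] at hb'
    have hX : z 1 ≠ 0 := by
      intro hX
      apply hzne
      rw [hX, mul_zero] at hb'
      funext k; fin_cases k <;> assumption
    have := cone_scale hcone (inv_ne_zero hX)
    apply ha
    convert this using 1
    funext k; fin_cases k
    · simp [hX]
    · simp [hb']; field_simp
    · simp [hS]
  · have hpC := cone_dehom h1.cl hcone hS
    replace hpC : ![z 1 / z 3, z 2 / z 3] ∈ C := hpC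
    set p : Fin 2 → K := ![z 1 / z 3, z 2 / z 3] with hp
    have hp0 : p 0 = z 1 / z 3 := rfl
    have hp1 : p 1 = z 2 / z 3 := rfl
    have hpb : p 1 = a * p 0 + b := by
      rw [hp0, hp1]; field_simp; linear_combination hb'
    refine hs b hb p hpC hpb (local_tangent h1 hV hb hpC hpb (hh b hb p hpC hpb) ?_)
    have hN : Continuous (fun v : Option (Fin 4) → K => ![v (some 0), v none * v (some 1), v none * v (some 2)]) := by
      refine cont_pol (fun k => ?_)
      fin_cases k
      · exact Pol.proj _
      · exact (Pol.proj _).mul (Pol.proj _)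
      · exact (Pol.proj _).mul (Pol.proj _)
    have key := inv_closure (isClosed_closure (s := grSet C (linP a s) h) |>.preimage hN) (3 : Fin 4) hS
      (closure_mono (by
        rintro _ ⟨q, hq, hqh, t, ht, rfl⟩
        refine ⟨ht, subset_closure ?_⟩
        have h0 : t⁻¹ * (t * q 0) = q 0 := inv_mul_cancel_left₀ ht _
        have h1 : t⁻¹ * (t * q 1) = q 1 := inv_mul_cancel_left₀ ht _
        have hq' : ![t⁻¹ * (t * q 0), t⁻¹ * (t * q 1)] = q := by rw [h0, h1, vec2_eta]
        refine ⟨?_, ?_, ?_⟩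
        · show ![t⁻¹ * (t * q 0), t⁻¹ * (t * q 1)] ∈ C
          rwa [hq']
        · show eval ![t⁻¹ * (t * q 0), t⁻¹ * (t * q 1)] h ≠ 0
          rwa [hq']
        · show eval q (linP a s) / eval q h * eval ![t⁻¹ * (t * q 0), t⁻¹ * (t * q 1)] h =
            eval ![t⁻¹ * (t * q 0), t⁻¹ * (t * q 1)] (linP a s)
          rw [hq', div_mul_cancel₀ _ hqh]) hz1)
    change ![z 0, (z 3)⁻¹ * z 1, (z 3)⁻¹ * z 2] ∈ closure (grSet C (linP a s) h) at key
    rw [hz0] at key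
    rw [hp0, hp1, div_eq_inv_mul, div_eq_inv_mul]
    exact key

end Main
end PC

open Topology TopologicalSpace
set_option linter.style.haveILetI false
set_option linter.unusedVariables false
set_option linter.unusedSectionVars false

namespace PC

section Alg
variable {K : Type*} [Field K]

theorem card_exps (d : ℕ) :
    2 * Nat.card {n : Fin 2 →₀ ℕ | (n.sum fun _ e => e) ≤ d} = (d + 1) * (d + 2) := by
  classical
  let T : Finset (ℕ × ℕ) := (Finset.range (d + 1)).biUnion (fun k => Finset.HasAntidiagonal.antidiagonal k)
  have hT : T.card = ∑ k ∈ Finset.range (d + 1), (k + 1) := by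
    rw [Finset.card_biUnion]
    · simp
    · intro i _ j _ hij
      simp only [Function.onFun]
      rw [Finset.disjoint_left]
      intro x hx hx'
      rw [Finset.HasAntidiagonal.mem_antidiagonal] at hx hx'
      exact hij (hx.symm.trans hx')
  have e : {n : Fin 2 →₀ ℕ | (n.sum fun _ e => e) ≤ d} ≃ T :=
    { toFun := fun n => ⟨(n.1 0, n.1 1), by
        have := n.2
        simp only [Set.mem_ofPred_eq] at this
        rw [Finsupp.sum_fintype _ _ (fun _ => rfl), Fin.sum_univ_two] at this
        simp [T]; omega⟩
      invFun := fun p => ⟨Finsupp.equivFunOnFinite.symm ![p.1.1, p.1.2], by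
        have hp : p.1 ∈ T := p.2
        simp only [T, Finset.mem_biUnion, Finset.mem_range, Finset.HasAntidiagonal.mem_antidiagonal] at hp
        obtain ⟨k, hk, hk'⟩ := hp
        simp only [Set.mem_ofPred_eq]
        rw [Finsupp.sum_fintype _ _ (fun _ => rfl), Fin.sum_univ_two]
        simp; omega⟩
      left_inv := fun n => by
        apply Subtype.ext
        ext i
        fin_cases i <;> rfl
      right_inv := fun p => by rfl }
  rw [Nat.card_congr e, Nat.card_eq_fintype_card, Fintype.card_coe, hT]
  clear e hT T
  induction d with
  | zero => simp
  | succ d ih => rw [Finset.sum_range_succ, mul_add, ih]; ring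

theorem finrank_rtd (d : ℕ) :
    2 * Module.finrank K (MvPolynomial.restrictTotalDegree (Fin 2) K d) = (d + 1) * (d + 2) := by
  rw [← card_exps d]
  congr 1
  exact Module.finrank_eq_nat_card_basis (MvPolynomial.basisRestrictSupport K _)

open MvPolynomial in
/-- a prime ideal, not maximal, containing a prime element is principal -/
theorem prime_principal {I J : Ideal (MvPolynomial (Fin 2) K)} (hI : I.IsPrime) (hJ : J.IsPrime) (hIJ : I < J)
    {f : MvPolynomial (Fin 2) K} (hf : Prime f) (hfI : f ∈ I) : I = Ideal.span {f} := by
  by_contra hne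
  have h0 : (⊥ : Ideal (MvPolynomial (Fin 2) K)) < Ideal.span {f} := by
    rw [bot_lt_iff_ne_bot, Ne, Ideal.span_singleton_eq_bot]
    exact hf.ne_zero
  have h1 : Ideal.span {f} < I := by
    refine lt_of_le_of_ne ?_ (Ne.symm hne)
    rwa [Ideal.span_singleton_le_iff_mem]
  have hdim : ringKrullDim (MvPolynomial (Fin 2) K) = 2 := by
    rw [MvPolynomial.ringKrullDim_of_isNoetherianRing]; simp
  let p0 : PrimeSpectrum (MvPolynomial (Fin 2) K) := ⟨⊥, Ideal.isPrime_bot⟩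
  let p1 : PrimeSpectrum (MvPolynomial (Fin 2) K) := ⟨Ideal.span {f}, (Ideal.span_singleton_prime hf.ne_zero).2 hf⟩
  let p2 : PrimeSpectrum (MvPolynomial (Fin 2) K) := ⟨I, hI⟩
  let p3 : PrimeSpectrum (MvPolynomial (Fin 2) K) := ⟨J, hJ⟩
  have l1 : p0 < p1 := h0
  have l2 : p1 < p2 := h1
  have l3 : p2 < p3 := hIJ
  let c : LTSeries (PrimeSpectrum (MvPolynomial (Fin 2) K)) :=
    { length := 3
      toFun := ![p0, p1, p2, p3]
      step := by
        intro i
        fin_cases i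
        · exact l1
        · exact l2
        · exact l3 }
  have : (3 : WithBot ℕ∞) ≤ 2 := by
    rw [← hdim]
    exact Order.LTSeries.length_le_krullDim c
  exact absurd this (by decide)

open Polynomial

/-- restriction of `f` to the line `y = q0 x + q1` -/
noncomputable def lineP (f : MvPolynomial (Fin 2) K) (q : Fin 2 → K) : K[X] :=
  MvPolynomial.aeval ![X, C (q 0) * X + C (q 1)] f

theorem lineP_eval (f : MvPolynomial (Fin 2) K) (q : Fin 2 → K) (x : K) :
    (lineP f q).eval x = MvPolynomial.eval ![x, q 0 * x + q 1] f := by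
  induction f using MvPolynomial.induction_on with
  | C a => simp [lineP]
  | add f g hf hg => simp only [lineP, map_add, eval_add] at *; rw [hf, hg]
  | mul_X f i hf =>
    simp only [lineP, map_mul, eval_mul, MvPolynomial.aeval_X, MvPolynomial.eval_X] at *
    rw [hf]
    fin_cases i <;> simp

theorem lineP_natDegree (f : MvPolynomial (Fin 2) K) (q : Fin 2 → K) : (lineP f q).natDegree ≤ f.totalDegree := by
  have := MvPolynomial.aeval_natDegree_le (n := 1) f le_rfl ![X, C (q 0) * X + C (q 1)] (by
    intro i
    fin_cases i
    · simp
    · exact natDegree_linear_le)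
  simpa [lineP] using this

/-- generic restriction -/
noncomputable def lineG (f : MvPolynomial (Fin 2) K) : (MvPolynomial (Fin 2) K)[X] :=
  MvPolynomial.eval₂ (C.comp MvPolynomial.C) ![X, C (MvPolynomial.X 0) * X + C (MvPolynomial.X 1)] f

theorem lineG_map (f : MvPolynomial (Fin 2) K) (q : Fin 2 → K) :
    (lineG f).map (MvPolynomial.eval q) = lineP f q := by
  induction f using MvPolynomial.induction_on with
  | C a => simp [lineP, lineG]
  | add f g hf hg => simp only [lineP, lineG, map_add, MvPolynomial.eval₂_add, Polynomial.map_add] at *; rw [hf, hg]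
  | mul_X f i hf =>
    simp only [lineP, lineG, map_mul, MvPolynomial.eval₂_mul, Polynomial.map_mul, MvPolynomial.aeval_X, MvPolynomial.eval₂_X] at *
    rw [hf]
    fin_cases i <;> simp

theorem res_ne_zero_iff {g : K[X]} {e : ℕ} (hg : g.natDegree = e) (he : e ≠ 0) :
    resultant g (derivative g) e e ≠ 0 ↔ g.Separable := by
  have hg0 : g ≠ 0 := by rintro rfl; simp at hg; exact he hg.symm
  have hd : (derivative g).natDegree ≤ e := (natDegree_derivative_le g).trans (by omega)
  obtain ⟨k, hk⟩ := Nat.exists_eq_add_of_le hd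
  have : resultant g (derivative g) e e = g.coeff e ^ k * resultant g (derivative g) := by
    conv_lhs => rw [show resultant g (derivative g) e e = resultant g (derivative g) e ((derivative g).natDegree + k) by rw [← hk]]
    rw [resultant_add_right_deg _ _ _ _ _ le_rfl, hg]
  rw [this, mul_ne_zero_iff, and_iff_right, Ne, resultant_eq_zero_iff, Polynomial.Separable]
  · simp [hg0]
  · apply pow_ne_zero
    rw [← hg]
    simpa using hg0

theorem exists_disc (f : MvPolynomial (Fin 2) K) {e : ℕ} (he : e ≠ 0) (hfe : f.totalDegree = e) :
    ∃ δ : MvPolynomial (Fin 2) K, ∀ q, MvPolynomial.eval q δ ≠ 0 ↔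
      ((lineP f q).natDegree = e ∧ (lineP f q).Separable) := by
  refine ⟨(lineG f).coeff e * resultant (lineG f) (derivative (lineG f)) e e, fun q => ?_⟩
  rw [map_mul, ← resultant_map_map, ← Polynomial.derivative_map, lineG_map, ← Polynomial.coeff_map, lineG_map,
    mul_ne_zero_iff]
  constructor
  · rintro ⟨h1, h2⟩
    have hd : (lineP f q).natDegree = e :=
      le_antisymm (hfe ▸ lineP_natDegree f q) (le_natDegree_of_ne_zero h1)
    exact ⟨hd, (res_ne_zero_iff hd he).1 h2⟩
  · rintro ⟨hd, hs⟩
    refine ⟨?_, (res_ne_zero_iff hd he).2 hs⟩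
    rw [← hd]
    simpa using hs.ne_zero

/-- zero set of `f` on a line -/
theorem line_inter (f : MvPolynomial (Fin 2) K) (q : Fin 2 → K) (h0 : lineP f q ≠ 0) :
    {p : Fin 2 → K | MvPolynomial.eval p f = 0 ∧ p 1 = q 0 * p 0 + q 1} =
      (fun x => ![x, q 0 * x + q 1]) '' {x | x ∈ (lineP f q).roots} := by
  ext p
  simp only [Set.mem_image, Set.mem_ofPred_eq, mem_roots h0, IsRoot, lineP_eval]
  constructor
  · rintro ⟨h1, h2⟩
    refine ⟨p 0, ?_, ?_⟩
    · rwa [← h2, vec2_eta]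
    · rw [← h2, vec2_eta]
  · rintro ⟨x, hx, rfl⟩
    exact ⟨hx, by simp⟩

theorem line_inter_ncard (f : MvPolynomial (Fin 2) K) (q : Fin 2 → K) (h0 : lineP f q ≠ 0) :
    {p : Fin 2 → K | MvPolynomial.eval p f = 0 ∧ p 1 = q 0 * p 0 + q 1}.Finite ∧
    {p : Fin 2 → K | MvPolynomial.eval p f = 0 ∧ p 1 = q 0 * p 0 + q 1}.ncard = ((lineP f q).rootSet K).ncard := by
  have : {x | x ∈ (lineP f q).roots} = (lineP f q).rootSet K := by
    ext x; simp [mem_rootSet, h0, mem_roots h0]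
  rw [line_inter f q h0, this]
  refine ⟨(rootSet_finite _ _).image _, Set.ncard_image_of_injective _ ?_⟩
  intro x y hxy
  exact congrFun hxy 0

theorem rootSet_le (g : K[X]) : (g.rootSet K).ncard ≤ g.natDegree := by
  classical
  rw [rootSet, aroots_def, Set.ncard_coe_finset]
  refine (Multiset.toFinset_card_le _).trans ?_
  simpa using card_roots' g

theorem sep_of_ncard [IsAlgClosed K] {g : K[X]} {e : ℕ} (h0 : g ≠ 0) (hd : g.natDegree ≤ e) :
    (g.rootSet K).ncard = e ↔ (g.natDegree = e ∧ g.Separable) := by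
  classical
  have hr : (g.rootSet K).ncard = g.roots.toFinset.card := by
    rw [rootSet, aroots_def, Set.ncard_coe_finset]; simp
  have hc : g.roots.card = g.natDegree := (splits_iff_card_roots.1 (IsAlgClosed.splits g))
  have hn := nodup_roots_iff_of_splits h0 (IsAlgClosed.splits g)
  rw [hr]
  constructor
  · intro h
    have h1 := Multiset.toFinset_card_le g.roots
    refine ⟨by omega, hn.1 ?_⟩
    rw [← Multiset.toFinset_card_eq_card_iff_nodup]
    omega
  · rintro ⟨h1, h2⟩
    rw [Multiset.toFinset_card_of_nodup (hn.2 h2), hc, h1]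

end Alg
end PC

open Topology TopologicalSpace
set_option linter.style.haveILetI false
set_option linter.unusedVariables false
set_option linter.unusedSectionVars false

namespace PC

section AlgMain
open MvPolynomial
variable {K : Type*} [Field K]

/-- ideal of polynomials vanishing on `C` -/
def vanI (C : Set (Fin 2 → K)) : Ideal (MvPolynomial (Fin 2) K) where
  carrier := {f | ∀ p ∈ C, eval p f = 0}
  add_mem' := fun {f g} hf hg p hp => by rw [map_add, hf p hp, hg p hp, add_zero]
  zero_mem' := fun p hp => map_zero _
  smul_mem' := fun c f hf p hp => by rw [smul_eq_mul, map_mul, hf p hp, mul_zero]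

theorem mem_vanI {C : Set (Fin 2 → K)} {f : MvPolynomial (Fin 2) K} : f ∈ vanI C ↔ ∀ p ∈ C, eval p f = 0 := Iff.rfl

theorem dim_count (V N : Submodule K (MvPolynomial (Fin 2) K)) [Module.Finite K V] [Module.Finite K N]
    (E : Finset (Fin 2 → K)) (h : ∀ g ∈ V, (∀ p ∈ E, eval p g = 0) → g ∈ N) :
    Module.finrank K V ≤ E.card + Module.finrank K N := by
  let φ : V →ₗ[K] (E → K) := LinearMap.pi (fun p => (MvPolynomial.aeval p.1).toLinearMap ∘ₗ V.subtype)
  have hφ : ∀ g p, φ g p = eval p.1 g.1 := fun g p => by simp [φ, MvPolynomial.aeval_eq_eval]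
  rw [← LinearMap.finrank_range_add_finrank_ker φ]
  refine add_le_add ?_ ?_
  · have := Submodule.finrank_le (LinearMap.range φ)
    simpa using this
  · let ψ : LinearMap.ker φ →ₗ[K] N := LinearMap.codRestrict N (V.subtype ∘ₗ (LinearMap.ker φ).subtype) (by
      intro g
      apply h _ g.1.2
      intro p hp
      have : φ g.1 = 0 := g.2
      have := congrFun this ⟨p, hp⟩
      rw [hφ] at this
      exact this)
    refine LinearMap.finrank_le_finrank_of_injective (f := ψ) ?_
    intro g g' hg
    have : (g.1.1 : MvPolynomial (Fin 2) K) = g'.1.1 := congrArg (fun z : N => z.1) hg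
    exact Subtype.ext (Subtype.ext this)

variable {C : Set (Fin 2 → K)}

theorem exists_E {a : K} (hinf : C.Infinite)
    (hL : ∀ b, (C ∩ {p | p 1 = a * p 0 + b}).Finite) {s : Finset K}
    (hmain : ∀ h : MvPolynomial (Fin 2) K, h.totalDegree ≤ s.card →
      (∀ b ∈ s, ∀ p ∈ C, p 1 = a * p 0 + b → eval p h = 0) → ∃ c : K, ∀ p ∈ C, eval p h = c * eval p (linP a s))
    (r : ℕ) (hr : ∀ b ∈ s, (C ∩ {p | p 1 = a * p 0 + b}).ncard ≤ r) :
    ∃ E : Finset (Fin 2 → K), E.card ≤ s.card * r + 1 ∧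
      ∀ g ∈ restrictTotalDegree (Fin 2) K s.card, (∀ p ∈ E, eval p g = 0) → g ∈ vanI C := by
  classical
  have hp0 : ∃ p0 ∈ C, eval p0 (linP a s) ≠ 0 := by
    by_contra hno
    push Not at hno
    apply hinf
    refine (Set.Finite.biUnion s.finite_toSet (fun b _ => hL b)).subset ?_
    intro p hp
    have := hno p hp
    rw [linP_eval, Finset.prod_eq_zero_iff] at this
    obtain ⟨b, hb, hb'⟩ := this
    rw [Set.mem_iUnion₂]
    refine ⟨b, hb, hp, ?_⟩
    show p 1 = a * p 0 + b
    linear_combination hb'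
  obtain ⟨p0, hp0, hp0'⟩ := hp0
  refine ⟨insert p0 (s.biUnion (fun b => (hL b).toFinset)), ?_, ?_⟩
  · refine (Finset.card_insert_le _ _).trans ?_
    gcongr
    refine Finset.card_biUnion_le_card_mul _ _ _ (fun b hb => ?_)
    rw [← Set.ncard_eq_toFinset_card _ (hL b)]
    exact hr b hb
  · intro g hg hgE
    obtain ⟨c, hc⟩ := hmain g ((mem_restrictTotalDegree _ _ _).1 hg) (by
      intro b hb p hp hpb
      apply hgE
      rw [Finset.mem_insert, Finset.mem_biUnion]
      exact Or.inr ⟨b, hb, by simpa using ⟨hp, hpb⟩⟩)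
    have h1 := hgE p0 (Finset.mem_insert_self _ _)
    rw [hc p0 hp0, mul_eq_zero, or_iff_left hp0'] at h1
    intro p hp
    rw [hc p hp, h1, zero_mul]

theorem lineP_dvd (f : MvPolynomial (Fin 2) K) (a b : K) (h0 : lineP f ![a, b] = 0) :
    ∃ g, f = (X 1 - MvPolynomial.C a * X 0 - MvPolynomial.C b) * g := by
  have key : ∃ g, f = Polynomial.aeval (X 0 : MvPolynomial (Fin 2) K) (lineP f ![a, b]) + (X 1 - MvPolynomial.C a * X 0 - MvPolynomial.C b) * g := by
    clear h0
    induction f using MvPolynomial.induction_on with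
    | C c => exact ⟨0, by simp [lineP, MvPolynomial.algebraMap_eq]⟩
    | add f g hf hg =>
      obtain ⟨u, hu⟩ := hf
      obtain ⟨v, hv⟩ := hg
      refine ⟨u + v, ?_⟩
      have : lineP (f + g) ![a, b] = lineP f ![a, b] + lineP g ![a, b] := by simp [lineP]
      rw [this, map_add]
      linear_combination hu + hv
    | mul_X f i hf =>
      obtain ⟨u, hu⟩ := hf
      fin_cases i
      · refine ⟨u * X 0, ?_⟩
        have : lineP (f * X 0) ![a, b] = lineP f ![a, b] * Polynomial.X := by simp [lineP]
        simp only [Fin.zero_eta]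
        rw [this, map_mul, Polynomial.aeval_X]
        linear_combination X 0 * hu
      · refine ⟨u * X 1 + Polynomial.aeval (X 0 : MvPolynomial (Fin 2) K) (lineP f ![a, b]), ?_⟩
        have : lineP (f * X 1) ![a, b] = lineP f ![a, b] * (Polynomial.C a * Polynomial.X + Polynomial.C b) := by
          simp [lineP]
        simp only [Fin.mk_one]
        rw [this, map_mul, map_add, map_mul, Polynomial.aeval_X, Polynomial.aeval_C, Polynomial.aeval_C,
          MvPolynomial.algebraMap_eq]
        linear_combination X 1 * hu
  obtain ⟨g, hg⟩ := key
  rw [h0, map_zero, zero_add] at hg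
  exact ⟨g, hg⟩

theorem alg_main [IsAlgClosed K] {a : K} {Bad : Set K} (hBad : Bad.Finite)
    (hprime : ∀ f g : MvPolynomial (Fin 2) K, f * g ∈ vanI C → f ∈ vanI C ∨ g ∈ vanI C)
    (hinf : C.Infinite)
    (hL : ∀ b, (C ∩ {p | p 1 = a * p 0 + b}).Finite) (M : ℕ)
    (hM : ∀ b, (C ∩ {p | p 1 = a * p 0 + b}).ncard ≤ M)
    (hmain : ∀ s : Finset K, (∀ b ∈ s, b ∉ Bad) → ∀ h : MvPolynomial (Fin 2) K, h.totalDegree ≤ s.card →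
      (∀ b ∈ s, ∀ p ∈ C, p 1 = a * p 0 + b → eval p h = 0) → ∃ c : K, ∀ p ∈ C, eval p h = c * eval p (linP a s)) :
    ∃ m : ℕ, ∃ F : MvPolynomial (Fin 2) K, (∃ q, eval q F ≠ 0) ∧ ∀ q, eval q F ≠ 0 →
      (C ∩ {p | p 1 = q 0 * p 0 + q 1}).Finite ∧ (C ∩ {p | p 1 = q 0 * p 0 + q 1}).ncard = m := by
  classical
  obtain ⟨x0, hx0⟩ := hinf.nonempty
  have h1I : (1 : MvPolynomial (Fin 2) K) ∉ vanI C := fun h => by simpa using h x0 hx0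
  have hI : (vanI C).IsPrime := ⟨fun h => h1I (h ▸ trivial), fun {f g} h => hprime f g h⟩
  -- the ideal is nonzero
  have hne : vanI C ≠ ⊥ := by
    intro hbot
    obtain ⟨s, hs, hcard⟩ := (hBad.infinite_compl).exists_subset_card_eq (2 * M + 2)
    obtain ⟨E, hE, hE'⟩ := exists_E hinf hL (hmain s (fun b hb => hs hb)) M (fun b _ => hM b)
    have h1 := dim_count (restrictTotalDegree (Fin 2) K s.card) ⊥ E (fun g hg hgE => by
      have := hE' g hg hgE
      rw [hbot] at this
      exact this)
    have h2 := finrank_rtd (K := K) s.card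
    rw [finrank_bot] at h1
    rw [hcard] at h1 h2 hE
    nlinarith
  obtain ⟨f, hfI, hf⟩ := hI.exists_mem_prime_of_ne_bot hne
  have hspan : vanI C = Ideal.span {f} := by
    refine prime_principal hI (J := RingHom.ker (eval x0)) (RingHom.ker_isPrime _) ?_ hf hfI
    refine lt_of_le_of_ne (fun g hg => hg x0 hx0) ?_
    intro heq
    obtain ⟨y, hy, hyx⟩ := hinf.exists_notMem_finset {x0}
    have hyx' : y ≠ x0 := by simpa using hyx
    apply hyx'
    funext i
    have : (X i - MvPolynomial.C (x0 i) : MvPolynomial (Fin 2) K) ∈ vanI C := by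
      rw [heq, RingHom.mem_ker]; simp
    have := this y hy
    simpa [sub_eq_zero] using this
  obtain ⟨e, he⟩ : ∃ e, f.totalDegree = e := ⟨_, rfl⟩
  have he0 : e ≠ 0 := by
    intro h
    rw [h, totalDegree_eq_zero_iff_eq_C] at he
    have h2 := hfI x0 hx0
    rw [he, eval_C] at h2
    rw [h2, map_zero] at he
    exact hf.ne_zero he
  have hdvd : ∀ g ∈ vanI C, ∃ k, g = f * k := by
    intro g hg
    rw [hspan, Ideal.mem_span_singleton] at hg
    exact hg
  -- most lines meet `C` in at least `e` points
  have hF : {b : K | (C ∩ {p | p 1 = a * p 0 + b}).ncard < e}.Finite := by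
    by_contra hFinf
    obtain ⟨s, hs, hcard⟩ := (Set.Infinite.sdiff hFinf hBad).exists_subset_card_eq (e + e * e)
    obtain ⟨e', rfl⟩ : ∃ e', e = e' + 1 := ⟨e - 1, by omega⟩
    obtain ⟨E, hE, hE'⟩ := exists_E hinf hL (hmain s (fun b hb => (hs hb).2)) e' (fun b hb =>
      Nat.lt_succ_iff.1 (hs hb).1)
    let N := (restrictTotalDegree (Fin 2) K ((e' + 1) * (e' + 1))).map (LinearMap.mulLeft K f)
    have h1 := dim_count (restrictTotalDegree (Fin 2) K s.card) N E (fun g hg hgE => by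
      obtain ⟨k, hk⟩ := hdvd g (hE' g hg hgE)
      refine ⟨k, ?_, hk.symm⟩
      by_cases hk0 : k = 0
      · rw [hk0]; exact Submodule.zero_mem _
      rw [SetLike.mem_coe, mem_restrictTotalDegree]
      rw [mem_restrictTotalDegree, hk, totalDegree_mul_of_isDomain hf.ne_zero hk0, he, hcard] at hg
      omega)
    have h2 := finrank_rtd (K := K) s.card
    have h3 := finrank_rtd (K := K) ((e' + 1) * (e' + 1))
    have h4 : Module.finrank K N ≤ _ := Submodule.finrank_map_le (LinearMap.mulLeft K f)
      (restrictTotalDegree (Fin 2) K ((e' + 1) * (e' + 1)))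
    rw [hcard] at h1 h2 hE
    nlinarith
  have hline : ∀ b, lineP f ![a, b] ≠ 0 := by
    intro b h0
    obtain ⟨g, hg⟩ := lineP_dvd f a b h0
    rcases hprime _ g (hg ▸ hfI) with h | h
    · apply hinf
      refine (hL b).subset (fun p hp => ⟨hp, ?_⟩)
      have := h p hp
      simp at this
      show p 1 = a * p 0 + b
      linear_combination this
    · obtain ⟨k, hk⟩ := hdvd g h
      rw [hk] at hg
      have h5 : (1 : MvPolynomial (Fin 2) K) = (X 1 - MvPolynomial.C a * X 0 - MvPolynomial.C b) * k := by
        apply mul_left_cancel₀ hf.ne_zero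
        linear_combination hg
      have := congrArg (eval ![0, b]) h5
      simp at this
  have hcut : ∀ b, (C ∩ {p | p 1 = a * p 0 + b}) ⊆
      {p : Fin 2 → K | eval p f = 0 ∧ p 1 = a * p 0 + b} := fun b p hp => ⟨hfI p hp.1, hp.2⟩
  have hfin : ∀ b, {p : Fin 2 → K | eval p f = 0 ∧ p 1 = a * p 0 + b}.Finite :=
    fun b => (line_inter_ncard f ![a, b] (hline b)).1
  have hncard : ∀ b, {p : Fin 2 → K | eval p f = 0 ∧ p 1 = a * p 0 + b}.ncard = ((lineP f ![a, b]).rootSet K).ncard :=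
    fun b => (line_inter_ncard f ![a, b] (hline b)).2
  have hle : ∀ b, {p : Fin 2 → K | eval p f = 0 ∧ p 1 = a * p 0 + b}.ncard ≤ e := by
    intro b
    rw [hncard]
    exact (rootSet_le _).trans (he ▸ lineP_natDegree f _)
  have hgood : ∀ b, ¬ (C ∩ {p | p 1 = a * p 0 + b}).ncard < e →
      (C ∩ {p | p 1 = a * p 0 + b}) = {p : Fin 2 → K | eval p f = 0 ∧ p 1 = a * p 0 + b} := by
    intro b hb
    exact Set.eq_of_subset_of_ncard_le (hcut b) (by have := hle b; omega) (hfin b)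
  have hexc : ({p : Fin 2 → K | eval p f = 0} \ C).Finite := by
    refine (Set.Finite.biUnion hF (fun b _ => hfin b)).subset ?_
    rintro p ⟨hp, hpC⟩
    rw [Set.mem_iUnion₂]
    refine ⟨p 1 - a * p 0, ?_, hp, by ring⟩
    by_contra hb
    have := hgood _ hb
    have h6 : p ∈ {q : Fin 2 → K | eval q f = 0 ∧ q 1 = a * q 0 + (p 1 - a * p 0)} := ⟨hp, by ring⟩
    rw [← this] at h6
    exact hpC h6.1
  obtain ⟨δ, hδ⟩ := exists_disc f he0 he
  have hδ0 : δ ≠ 0 := by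
    obtain ⟨b, hb⟩ := hF.exists_notMem
    have h7 : ((lineP f ![a, b]).rootSet K).ncard = e := by
      rw [← hncard]
      have i1 := hle b
      have i2 := hgood b hb
      have i3 : ¬ (C ∩ {p | p 1 = a * p 0 + b}).ncard < e := hb
      rw [i2] at i3
      omega
    have h8 := (hδ ![a, b]).2 ((sep_of_ncard (hline b) (he ▸ lineP_natDegree f _)).1 h7)
    rintro rfl
    simp at h8
  let R : MvPolynomial (Fin 2) K := ∏ p ∈ hexc.toFinset, (MvPolynomial.C (p 1) - X 0 * MvPolynomial.C (p 0) - X 1)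
  have hR : R ≠ 0 := by
    rw [Finset.prod_ne_zero_iff]
    intro p hp h0
    have := congrArg (eval ![0, p 1 + 1]) h0
    simp at this
  refine ⟨e, δ * R, ?_, ?_⟩
  · by_contra hno
    push Not at hno
    exact mul_ne_zero hδ0 hR (MvPolynomial.funext (fun q => by rw [hno q, map_zero]))
  · intro q hq
    rw [map_mul, mul_ne_zero_iff] at hq
    obtain ⟨hq1, hq2⟩ := hq
    have hsep := (hδ q).1 hq1
    have hq0 : lineP f q ≠ 0 := hsep.2.ne_zero
    have heq : C ∩ {p | p 1 = q 0 * p 0 + q 1} = {p : Fin 2 → K | eval p f = 0 ∧ p 1 = q 0 * p 0 + q 1} := by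
      ext p
      constructor
      · rintro ⟨h, h'⟩; exact ⟨hfI p h, h'⟩
      · rintro ⟨h, h'⟩
        refine ⟨?_, h'⟩
        by_contra hpC
        apply hq2
        simp only [R, map_prod]
        refine Finset.prod_eq_zero (i := p) (by simpa using ⟨h, hpC⟩) ?_
        simp [h']
    rw [heq]
    obtain ⟨h9, h10⟩ := line_inter_ncard f q hq0
    refine ⟨h9, ?_⟩
    rw [h10]
    exact (sep_of_ncard hq0 (he ▸ lineP_natDegree f _)).2 hsep

end AlgMain
end PC

open Topology TopologicalSpace
set_option linter.style.haveILetI false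
set_option linter.unusedVariables false
set_option linter.unusedSectionVars false

namespace PC

section Final
open MvPolynomial
variable {K : Type*} [Field K] [IsAlgClosed K] [ZG K] {C : Set (Fin 2 → K)}

theorem exists_bound (hC : IsClosed C) {a : K} (hL : ∀ b, (C ∩ {p | p 1 = a * p 0 + b}).Finite) :
    ∃ M : ℕ, ∀ b, (C ∩ {p | p 1 = a * p 0 + b}).ncard ≤ M := by
  have hc : Continuous (fun v : Option Unit → K => ![v none, a * v none + v (some ())]) := by
    refine cont_pol (fun k => ?_)
    fin_cases k
    · exact Pol.proj _
    · exact ((Pol.const _).mul (Pol.proj _)).add (Pol.proj _)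
  obtain ⟨M, hM⟩ := ZG.z2 Unit _ (hC.preimage hc)
  refine ⟨M, fun b => ?_⟩
  have himg : C ∩ {p | p 1 = a * p 0 + b} = (fun x : K => (![x, a * x + b] : Fin 2 → K)) ''
      {x | ![x, a * x + b] ∈ C} := by
    ext p
    constructor
    · rintro ⟨h, h'⟩
      have h' : p 1 = a * p 0 + b := h'
      refine ⟨p 0, ?_, ?_⟩
      · show ![p 0, a * p 0 + b] ∈ C
        rwa [← h', vec2_eta]
      · show ![p 0, a * p 0 + b] = p
        rw [← h', vec2_eta]
    · rintro ⟨x, hx, rfl⟩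
      exact ⟨hx, by simp⟩
  have hinj : Function.Injective (fun x : K => (![x, a * x + b] : Fin 2 → K)) := fun x y h => congrFun h 0
  have hset : {x : K | oc x (fun _ : Unit => b) ∈ (fun v : Option Unit → K => ![v none, a * v none + v (some ())]) ⁻¹' C} =
    {x | ![x, a * x + b] ∈ C} := rfl
  rcases hM (fun _ => b) with h | h
  · exfalso
    rw [hset] at h
    have := hL b
    rw [himg, h] at this
    exact Set.infinite_univ (this.of_finite_image hinj.injOn)
  · rw [himg, Set.ncard_image_of_injective _ hinj]
    exact h.2

theorem core (h1 : IrrDim 1 C) (h2 : ¬ IrrDim 2 C) :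
    ∃ m : ℕ, ∃ F : MvPolynomial (Fin 2) K, (∃ q, eval q F ≠ 0) ∧ ∀ q, eval q F ≠ 0 →
      (C ∩ {p | p 1 = q 0 * p 0 + q 1}).Finite ∧ (C ∩ {p | p 1 = q 0 * p 0 + q 1}).ncard = m := by
  by_cases hV : ∀ c, (C ∩ {p | p 0 = c}).Finite
  · obtain ⟨a, ha, hB, hL⟩ := exists_slope h1 h2 hV
    obtain ⟨M, hM⟩ := exists_bound h1.cl hL
    refine alg_main (hB.image (fun p => p 1 - a * p 0)) ?_ h1.infinite hL M hM ?_
    · intro f g hfg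
      have polf : ∀ f : MvPolynomial (Fin 2) K, IsClosed {p : Fin 2 → K | eval p f = 0} :=
        fun f => Pol.isClosed ⟨f, fun _ => rfl⟩ (Pol.const 0)
      exact isPreirreducible_iff_isClosed_union_isClosed.1 h1.irr.isPreirreducible _ _
        (polf f) (polf g) (fun p hp => by
          have := hfg p hp
          rw [map_mul, mul_eq_zero] at this
          exact this)
    · intro s hs h hd hh
      refine main_lemma h1 hV ha hL ?_ hd hh
      intro b hb p hp hpb hsec
      apply hs b hb
      refine ⟨p, ⟨hp, hsec⟩, ?_⟩
      show p 1 - a * p 0 = b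
      rw [hpb]; ring
  · push Not at hV
    obtain ⟨c, hc⟩ := hV
    have hcl : IsClosed {p : Fin 2 → K | p 0 = c} := (Pol.proj 0).isClosed (Pol.const c)
    have hsub := (sub_or_fin h1 h2 hcl).resolve_right hc
    have hall : ∀ y, ![c, y] ∈ C := by
      rcases fin_or_univ' (φ := fun b : K => ![c, b]) (fun k => by
        fin_cases k
        · exact Or.inr ⟨c, fun _ => rfl⟩
        · exact Or.inl (fun _ => rfl)) h1.cl with h | h
      · intro y
        have : y ∈ {b : K | ![c, b] ∈ C} := h ▸ trivial
        exact this
      · exfalso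
        apply h1.infinite
        refine (h.image (fun b => ![c, b])).subset ?_
        intro p hp
        have e : ![c, p 1] = p := by
          rw [← (hsub hp : p 0 = c), vec2_eta]
        exact ⟨p 1, by rw [Set.mem_ofPred_eq, e]; exact hp, e⟩
    refine ⟨1, 1, ⟨0, by simp⟩, fun q _ => ?_⟩
    have : C ∩ {p | p 1 = q 0 * p 0 + q 1} = {![c, q 0 * c + q 1]} := by
      ext p
      rw [Set.mem_singleton_iff]
      constructor
      · rintro ⟨h, h'⟩
        have h' : p 1 = q 0 * p 0 + q 1 := h'
        rw [← (hsub h : p 0 = c), ← h', vec2_eta]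
      · rintro rfl
        exact ⟨hall _, by simp⟩
    rw [this]
    exact ⟨Set.finite_singleton _, Set.ncard_singleton _⟩

end Final
end PC

/-- The degree of a plane curve of a Zariski geometry refining the Zariski topology on
an algebraically closed field is well defined: there are `m : ℕ` and a nonempty
Zariski-open set `U` of parameters `(a, b)` such that every line `y = a·x + b` with
`(a, b) ∈ U` meets the curve in exactly `m` points. -/
theorem degree_of_plane_curve_well_defined
    {K : Type*} [Field K] [IsAlgClosed K] (Z : ZariskiGeometry K)
    (hrefine : ∀ (n : ℕ) (C : Set (Fin n → K)), ZariskiClosedSet K C → IsClosed[Z.τ n] C)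
    (C : Set (Fin 2 → K)) (hCcl : IsClosed[Z.τ 2] C)
    (hCirr : @IsIrreducible _ (Z.τ 2) C)
    (hCdim : setKrullDim (Z.τ 2) C = 1) :
    ∃ (m : ℕ) (U : Set (Fin 2 → K)), U.Nonempty ∧ IsOpen[zariskiTopology K 2] U ∧
      ∀ q ∈ U,
        (C ∩ {p : Fin 2 → K | p 1 = q 0 * p 0 + q 1}).Finite ∧
        (C ∩ {p : Fin 2 → K | p 1 = q 0 * p 0 + q 1}).ncard = m := by
  letI : PC.ZG K := PC.mkZG Z hrefine
  have ht : PC.ZG.top (K := K) (Fin 2) = Z.τ 2 := PC.tt_fin Z 2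
  rw [← ht] at hCcl hCirr hCdim
  have key : ∀ k : ℕ, PC.IrrDim k C ↔ ((k : WithBot ℕ∞) ≤ setKrullDim (PC.ZG.top (K := K) (Fin 2)) C) :=
    fun k => PC.irrDim_iff hCirr hCcl
  obtain ⟨m, F, ⟨q0, hq0⟩, hF⟩ := PC.core (C := C)
    ((key 1).2 (by rw [hCdim]; exact le_rfl)) (fun h => by
      have := (key 2).1 h
      rw [hCdim] at this
      exact absurd this (by decide))
  refine ⟨m, {q | MvPolynomial.eval q F ≠ 0}, ⟨q0, hq0⟩, ?_, fun q hq => hF q hq⟩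
  apply TopologicalSpace.isOpen_generateFrom_of_mem
  refine ⟨{F}, ?_⟩
  ext q
  simp
end
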